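/- arXiv:1801.02283 — 8 statements merged into one kernel-verified Lean document; each statement's English description precedes it below -/
import Mathlib

section
/- Let p be a prime, η ≥ 1 an integer, and f : ℤ_p → ℝ a bounded function which is p-uniformly locally constant multiplicative with uniformity constant η, i.e. for all nonzero x, y ∈ ℤ_p with ν_p(x) = ν_p(y) and x·p^{−ν_p(x)} ≡ y·p^{−ν_p(y)} (mod p^η) one has f(x) = f(y). Then for every integer e ≥ 0, ∫_{{t ∈ ℤ_p : ν_p(t) = e}} f dμ = p^{−(e+η)} · Σ_{d} f(d·p^e), where the sum runs over the integers d with 1 ≤ d ≤ p^η and gcd(d, p) = 1. -/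
/-!
The shell `{t : ν_p(t) = e}` is the disjoint union of the cosets `d·p^e + p^(e+η) ℤ_p`, where `d`
runs over the residues modulo `p^η` prime to `p` (`shell_eq_biUnion`, `cell_pairwiseDisjoint`):
writing `t = u·p^e` with `u` a unit, `t` lies in the coset of `d` exactly when `u ≡ d` modulo
`p^η`. On such a coset the hypothesis on `f` says that `f` is constant, equal to `f (d·p^e)`, and
by translation invariance the coset has measure `1 / [ℤ_p : p^(e+η) ℤ_p] = p^(-(e+η))`
(`measureReal_cell`).
-/

open MeasureTheory Classical

/-- The unit part `x·p^{-ν_p(x)}` of a nonzero `p`-adic integer (junk value `0` at `x = 0`). -/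
noncomputable def PadicInt.unitPart {p : ℕ} [Fact p.Prime] (x : ℤ_[p]) : ℤ_[p] :=
  if hx : x = 0 then 0 else (PadicInt.unitCoeff hx : ℤ_[p])

namespace PadicShell

variable {p : ℕ} [Fact p.Prime]

/-- The coset `a + p^n ℤ_p`. -/
def cell (n : ℕ) (a : ℤ_[p]) : Set ℤ_[p] := {t | (p : ℤ_[p]) ^ n ∣ t - a}

lemma p_ne_zero : (p : ℤ_[p]) ≠ 0 := PadicInt.prime_p.ne_zero

lemma unit_mul_pow_ne_zero (u : ℤ_[p]ˣ) (e : ℕ) : (u : ℤ_[p]) * (p : ℤ_[p]) ^ e ≠ 0 :=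
  mul_ne_zero u.ne_zero (pow_ne_zero _ p_ne_zero)

lemma valuation_unit_mul_pow (u : ℤ_[p]ˣ) (e : ℕ) :
    ((u : ℤ_[p]) * (p : ℤ_[p]) ^ e).valuation = e := by
  have hu : (u : ℤ_[p]).valuation = 0 := by
    have h := PadicInt.valuation_mul (p := p) u.ne_zero u⁻¹.ne_zero
    rw [Units.mul_inv, PadicInt.valuation_one] at h
    omega
  rw [PadicInt.valuation_mul u.ne_zero (pow_ne_zero _ p_ne_zero), PadicInt.valuation_pow, hu]
  simp

lemma unitPart_unit_mul_pow (u : ℤ_[p]ˣ) (e : ℕ) :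
    ((u : ℤ_[p]) * (p : ℤ_[p]) ^ e).unitPart = u := by
  have h0 := unit_mul_pow_ne_zero u e
  have h := PadicInt.unitCoeff_spec h0
  rw [valuation_unit_mul_pow] at h
  rw [PadicInt.unitPart, dif_neg h0]
  exact (mul_right_cancel₀ (pow_ne_zero _ p_ne_zero) h).symm

lemma mem_shell_iff {e : ℕ} {t : ℤ_[p]} :
    (t ≠ 0 ∧ t.valuation = e) ↔ ∃ u : ℤ_[p]ˣ, t = u * (p : ℤ_[p]) ^ e := by
  constructor
  · rintro ⟨h0, rfl⟩
    exact ⟨_, PadicInt.unitCoeff_spec h0⟩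
  · rintro ⟨u, rfl⟩
    exact ⟨unit_mul_pow_ne_zero u e, valuation_unit_mul_pow u e⟩

lemma isUnit_natCast_iff {d : ℕ} : IsUnit (d : ℤ_[p]) ↔ Nat.gcd d p = 1 := by
  rw [PadicInt.isUnit_iff, PadicInt.norm_natCast_eq_one_iff, Nat.coprime_comm]

/-- For `η ≥ 1`, units are stable under congruence modulo `p^η`. -/
lemma isUnit_of_dvd_sub {η : ℕ} (hη : 1 ≤ η) {x y : ℤ_[p]} (hx : IsUnit x)
    (h : (p : ℤ_[p]) ^ η ∣ x - y) : IsUnit y := by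
  by_contra hy
  rw [PadicInt.not_isUnit_iff, PadicInt.norm_lt_one_iff_dvd] at hy
  have h1 : (p : ℤ_[p]) ∣ x - y := (dvd_pow_self _ (by omega)).trans h
  exact PadicInt.prime_p.not_isUnit (isUnit_of_dvd_unit ((dvd_sub_left hy).1 h1) hx)

lemma mul_pow_mem_cell_iff {e η : ℕ} {x y : ℤ_[p]} :
    x * (p : ℤ_[p]) ^ e ∈ cell (e + η) (y * (p : ℤ_[p]) ^ e) ↔ (p : ℤ_[p]) ^ η ∣ x - y := by
  change (p : ℤ_[p]) ^ (e + η) ∣ _ ↔ _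
  rw [← sub_mul, pow_add, mul_comm]
  exact mul_dvd_mul_iff_right (pow_ne_zero _ p_ne_zero)

/-- The coset of `d·p^e` modulo `p^(e+η)`, for a unit `d`, in terms of unit parts. -/
lemma mem_cell_iff {e η : ℕ} (hη : 1 ≤ η) {d t : ℤ_[p]} (hd : IsUnit d) :
    t ∈ cell (e + η) (d * (p : ℤ_[p]) ^ e) ↔
      ∃ u : ℤ_[p]ˣ, t = u * (p : ℤ_[p]) ^ e ∧ (p : ℤ_[p]) ^ η ∣ u - d := by
  constructor
  · intro h
    have h1 : (p : ℤ_[p]) ^ e ∣ t :=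
      (dvd_sub_left (dvd_mul_left _ d)).1 ((pow_dvd_pow _ (Nat.le_add_right e η)).trans h)
    obtain ⟨x, rfl⟩ := h1
    rw [mul_comm _ x, mul_pow_mem_cell_iff] at h
    obtain ⟨u, rfl⟩ := isUnit_of_dvd_sub hη hd ((dvd_sub_comm).1 h)
    exact ⟨u, mul_comm _ _, h⟩
  · rintro ⟨u, rfl, h⟩
    exact mul_pow_mem_cell_iff.2 h

/-- The representatives of the units modulo `p^η` used in the sum. -/
noncomputable def reps (p η : ℕ) : Finset ℕ :=
  (Finset.Icc 1 (p ^ η)).filter (fun d => Nat.gcd d p = 1)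

lemma shell_eq_biUnion {η : ℕ} (hη : 1 ≤ η) (e : ℕ) :
    {t : ℤ_[p] | t ≠ 0 ∧ t.valuation = e} =
      ⋃ d ∈ reps p η, cell (e + η) ((d : ℤ_[p]) * (p : ℤ_[p]) ^ e) := by
  ext t
  simp only [Set.mem_ofPred_eq, Set.mem_iUnion, exists_prop]
  rw [mem_shell_iff]
  constructor
  · rintro ⟨u, rfl⟩
    have h : (p : ℤ_[p]) ^ η ∣ u - ((u : ℤ_[p]).appr η : ℤ_[p]) :=
      Ideal.mem_span_singleton.1 (PadicInt.appr_spec η _)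
    have hd := isUnit_natCast_iff.1 (isUnit_of_dvd_sub hη u.isUnit h)
    refine ⟨_, ?_, mul_pow_mem_cell_iff.2 h⟩
    refine Finset.mem_filter.2 ⟨Finset.mem_Icc.2 ⟨?_, (PadicInt.appr_lt _ _).le⟩, hd⟩
    rw [Nat.one_le_iff_ne_zero]
    intro h0
    rw [h0, Nat.gcd_zero_left] at hd
    exact (Fact.out : p.Prime).ne_one hd
  · rintro ⟨d, hd, ht⟩
    obtain ⟨u, hu, -⟩ :=
      (mem_cell_iff hη (isUnit_natCast_iff.2 (Finset.mem_filter.1 hd).2)).1 ht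
    exact ⟨u, hu⟩

lemma cell_pairwiseDisjoint (e η : ℕ) :
    (reps p η : Set ℕ).PairwiseDisjoint
      (fun d : ℕ => cell (e + η) ((d : ℤ_[p]) * (p : ℤ_[p]) ^ e)) := by
  intro a ha b hb hab
  refine Set.disjoint_left.2 fun t hta htb => hab ?_
  have h : (p : ℤ_[p]) ^ η ∣ (a : ℤ_[p]) - b := by
    rw [← mul_pow_mem_cell_iff (e := e)]
    have h := dvd_sub htb hta
    rwa [sub_sub_sub_cancel_left] at h
  have h2 : ((p : ℤ) ^ η) ∣ (a : ℤ) - b := by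
    rw [← PadicInt.pow_p_dvd_int_iff]
    exact_mod_cast h
  have ha' := Finset.mem_Icc.1 (Finset.mem_filter.1 ha).1
  have hb' := Finset.mem_Icc.1 (Finset.mem_filter.1 hb).1
  have h3 : |(a : ℤ) - b| < (p : ℤ) ^ η := by
    have := ha'.2
    have := hb'.2
    rw [abs_lt]
    zify at *
    constructor <;> linarith
  have := Int.eq_zero_of_abs_lt_dvd h2 h3
  omega

lemma measurableSet_cell [MeasurableSpace ℤ_[p]] [BorelSpace ℤ_[p]] (n : ℕ) (a : ℤ_[p]) :
    MeasurableSet (cell n a) := by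
  have h : cell n a = {t | ‖t - a‖ ≤ (p : ℝ) ^ (-n : ℤ)} := by
    ext t
    change (p : ℤ_[p]) ^ n ∣ _ ↔ _
    rw [Set.mem_ofPred_eq, PadicInt.norm_le_pow_iff_mem_span_pow, Ideal.mem_span_singleton]
  rw [h]
  exact (isClosed_le (by fun_prop) continuous_const).measurableSet

lemma measureReal_cell [MeasurableSpace ℤ_[p]] [BorelSpace ℤ_[p]]
    (μ : Measure ℤ_[p]) [μ.IsAddHaarMeasure] [IsProbabilityMeasure μ] (n : ℕ) (a : ℤ_[p]) :
    μ.real (cell n a) = ((p : ℝ) ^ n)⁻¹ := by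
  have htrans : μ (cell n a) = μ (cell n (0 : ℤ_[p])) := by
    rw [← measure_preimage_add_right μ (-a) (cell n (0 : ℤ_[p]))]
    congr 1
    ext t
    simp [cell, sub_eq_add_neg]
  let φ : ℤ_[p] →+ ZMod (p ^ n) := (PadicInt.toZModPow n : ℤ_[p] →+* ZMod (p ^ n)).toAddMonoidHom
  have hker : (φ.ker : Set ℤ_[p]) = cell n 0 := by
    ext t
    have h := SetLike.ext_iff.1 (PadicInt.ker_toZModPow (p := p) n) t
    rw [Ideal.mem_span_singleton, RingHom.mem_ker] at h
    simpa [cell, φ, AddMonoidHom.mem_ker] using h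
  have hidx : φ.ker.index = p ^ n := by
    have hsurj : Function.Surjective φ :=
      ZMod.ringHom_surjective (PadicInt.toZModPow n : ℤ_[p] →+* ZMod (p ^ n))
    rw [AddSubgroup.index_ker, AddMonoidHom.range_eq_top.2 hsurj, AddSubgroup.card_top,
      Nat.card_zmod]
  have hpos : p ^ n ≠ 0 := pow_ne_zero _ (Fact.out : p.Prime).ne_zero
  have : φ.ker.FiniteIndex := ⟨by rw [hidx]; exact hpos⟩
  have h := AddSubgroup.index_mul_measure φ.ker (hker ▸ measurableSet_cell n 0) μ
  rw [hidx, hker, measure_univ] at h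
  have h' := congrArg ENNReal.toReal h
  rw [ENNReal.toReal_mul, ENNReal.toReal_natCast, ENNReal.toReal_one] at h'
  rw [measureReal_def, htrans]
  push_cast at h'
  exact eq_inv_of_mul_eq_one_right h'

end PadicShell

open PadicShell

/-- If `f : ℤ_p → ℝ` is bounded and `p`-uniformly locally constant
multiplicative with uniformity constant `η ≥ 1`, then for every `e ≥ 0` the integral of `f`
over the shell `{t : ν_p(t) = e}` equals `p^{-(e+η)} · Σ_d f(d·p^e)`, the sum being over
`1 ≤ d ≤ p^η` with `gcd(d,p) = 1`. -/
theorem integral_shell_of_uniformly_locally_constant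
    (p : ℕ) [Fact p.Prime]
    [MeasurableSpace ℤ_[p]] [BorelSpace ℤ_[p]]
    (μ : Measure ℤ_[p]) [μ.IsAddHaarMeasure] [IsProbabilityMeasure μ]
    (η : ℕ) (hη : 1 ≤ η)
    (f : ℤ_[p] → ℝ)
    (hbdd : ∃ C : ℝ, ∀ x : ℤ_[p], |f x| ≤ C)
    (hf : ∀ x y : ℤ_[p], x ≠ 0 → y ≠ 0 → x.valuation = y.valuation →
      (p : ℤ_[p]) ^ η ∣ (x.unitPart - y.unitPart) → f x = f y)
    (e : ℕ) :
    ∫ t in {t : ℤ_[p] | t ≠ 0 ∧ t.valuation = e}, f t ∂μ =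
      (∑ d ∈ (Finset.Icc 1 (p ^ η)).filter (fun d => Nat.gcd d p = 1),
        f ((d : ℤ_[p]) * (p : ℤ_[p]) ^ e)) / (p : ℝ) ^ (e + η) := by
  have hconst : ∀ d ∈ reps p η, ∀ t ∈ cell (e + η) ((d : ℤ_[p]) * (p : ℤ_[p]) ^ e),
      f t = f ((d : ℤ_[p]) * (p : ℤ_[p]) ^ e) := by
    intro d hd t ht
    have hdu := isUnit_natCast_iff (p := p).2 (Finset.mem_filter.1 hd).2
    obtain ⟨u, rfl, h⟩ := (mem_cell_iff hη hdu).1 ht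
    obtain ⟨v, hv⟩ := hdu
    rw [← hv] at h ⊢
    apply hf _ _ (unit_mul_pow_ne_zero u e) (unit_mul_pow_ne_zero v e)
    · rw [valuation_unit_mul_pow, valuation_unit_mul_pow]
    · rwa [unitPart_unit_mul_pow, unitPart_unit_mul_pow]
  rw [shell_eq_biUnion hη e, integral_biUnion_finset _ (fun d _ => measurableSet_cell _ _)
    (cell_pairwiseDisjoint e η), Finset.sum_div]
  · refine Finset.sum_congr rfl fun d hd => ?_
    rw [setIntegral_congr_fun (measurableSet_cell _ _) (hconst d hd), setIntegral_const,
      measureReal_cell, smul_eq_mul, div_eq_inv_mul]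
  · intro d hd
    exact (integrableOn_congr_fun (hconst d hd) (measurableSet_cell _ _)).2
      (integrableOn_const (measure_ne_top _ _))
end

section
/- Let p ≥ 5 be a prime and s ∈ ℤ_p nonzero. For an integer k ≥ 0 set S_k := {t ∈ ℤ_p : 2ν_p(t) = ν_p(s) and ν_p(t² − s) = ν_p(s) + k}. If ν_p(s) is odd, then μ(S_k) = 0 for every k. If ν_p(s) = 2m is even, then: μ(S_0) = (p−1)/p^{m+1} if s_p is not a quadratic residue modulo p, and μ(S_0) = (p−3)/p^{m+1} if s_p is a quadratic residue modulo p; and for every k ≥ 1, μ(S_k) = 0 if s_p is not a quadratic residue modulo p, and μ(S_k) = 2(p−1)/p^{m+k+1} if s_p is a quadratic residue modulo p. -/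
/-!
Write `s = u p^{2m}` with `u` a unit, and let `W_j` (`levelSet`) be the set of `t` with
`ν_p(t) = m` and `p^{2m+j} ∣ t² − s`. These sets decrease in `j`, and `S_k = W_k \ W_{k+1}`, so it
suffices to know `μ(W_j)`.

* `W_0` is the sphere `ν_p(t) = m`, of measure `p^{-m} − p^{-(m+1)}` (`levelSet_zero`).
* If `u` is not a square mod `p`, then `W_j = ∅` for `j ≥ 1` (`levelSet_eq_empty`).
* If `u` is a square mod `p`, Hensel's lemma gives `r` with `r² = s` (`exists_sqrt`). As `p` is odd,
  it divides at most one of `(t − r)/p^m` and `(t + r)/p^m`, so for `j ≥ 1` the set `W_j` is the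
  disjoint union of the balls of radius `p^{-(m+j)}` about `r` and `−r` (`levelSet_eq_union`), and
  `μ(W_j) = 2 p^{-(m+j)}`.

A ball of radius `p^{-n}` is a coset of a subgroup of index `p^n`, hence has measure `p^{-n}`
(`measureReal_padicBall`). If `ν_p(s)` is odd, the condition `2ν_p(t) = ν_p(s)` has no solution.
-/

open MeasureTheory Classical

namespace MeasureSk

variable {p : ℕ} [Fact p.Prime]

/-- The closed ball of radius `p^{-n}` about `a`, written as the congruence class of `a` modulo
`p^n`. -/
def padicBall (a : ℤ_[p]) (n : ℕ) : Set ℤ_[p] := {t | (p : ℤ_[p]) ^ n ∣ t - a}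

/-- The `t` with `ν_p(t) = m` and `ν_p(t² − s) ≥ 2m + j`. Valuations are expressed by divisibility,
so that `t² = s` is allowed. -/
def levelSet (s : ℤ_[p]) (m j : ℕ) : Set ℤ_[p] :=
  {t | (p : ℤ_[p]) ^ m ∣ t ∧ ¬ (p : ℤ_[p]) ^ (m + 1) ∣ t ∧ (p : ℤ_[p]) ^ (2 * m + j) ∣ t ^ 2 - s}

/-! ### Valuations and balls -/

lemma pow_dvd_iff_le_valuation {x : ℤ_[p]} (hx : x ≠ 0) (n : ℕ) :
    (p : ℤ_[p]) ^ n ∣ x ↔ n ≤ x.valuation := by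
  rw [← PadicInt.mem_span_pow_iff_le_valuation x hx, Ideal.mem_span_singleton]

lemma valuation_eq_iff (x : ℤ_[p]) (n : ℕ) :
    (x ≠ 0 ∧ x.valuation = n) ↔ ((p : ℤ_[p]) ^ n ∣ x ∧ ¬ (p : ℤ_[p]) ^ (n + 1) ∣ x) := by
  by_cases hx : x = 0
  · simp [hx]
  · rw [pow_dvd_iff_le_valuation hx, pow_dvd_iff_le_valuation hx]
    simp only [ne_eq, hx, not_false_eq_true, true_and]
    omega

lemma padicBall_eq_closedBall (a : ℤ_[p]) (n : ℕ) :
    padicBall a n = Metric.closedBall a ((p : ℝ) ^ (-n : ℤ)) := by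
  ext t
  rw [Metric.mem_closedBall, dist_eq_norm, PadicInt.norm_le_pow_iff_mem_span_pow,
    Ideal.mem_span_singleton]
  rfl

lemma measurableSet_padicBall [MeasurableSpace ℤ_[p]] [BorelSpace ℤ_[p]] (a : ℤ_[p]) (n : ℕ) :
    MeasurableSet (padicBall a n) := by
  rw [padicBall_eq_closedBall]
  exact Metric.isClosed_closedBall.measurableSet

lemma measureReal_padicBall [MeasurableSpace ℤ_[p]] [BorelSpace ℤ_[p]]
    (μ : Measure ℤ_[p]) [μ.IsAddHaarMeasure] [IsProbabilityMeasure μ] (a : ℤ_[p]) (n : ℕ) :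
    μ.real (padicBall a n) = 1 / (p : ℝ) ^ n := by
  have hp0 : (p : ℝ) ≠ 0 := by exact_mod_cast (Fact.out : p.Prime).ne_zero
  have h0 : μ (padicBall a n) = μ (padicBall 0 n) := by
    have : padicBall a n = (fun t => t + -a) ⁻¹' padicBall 0 n := by
      ext t; simp [padicBall, sub_eq_add_neg]
    rw [this, measure_preimage_add_right]
  -- `p^n ℤ_p` is the kernel of reduction modulo `p^n`, and its index is the size of the image.
  set H : AddSubgroup ℤ_[p] := (PadicInt.toZModPow (p := p) n).toAddMonoidHom.ker with hH
  have hHb : (H : Set ℤ_[p]) = padicBall 0 n := by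
    ext t
    have h1 : t ∈ H ↔ t ∈ RingHom.ker (PadicInt.toZModPow (p := p) n) := Iff.rfl
    rw [SetLike.mem_coe, h1, PadicInt.ker_toZModPow, Ideal.mem_span_singleton]
    simp [padicBall]
  have hidx : H.index = p ^ n := by
    have hsurj : Function.Surjective (PadicInt.toZModPow (p := p) n).toAddMonoidHom :=
      ZMod.ringHom_surjective (PadicInt.toZModPow (p := p) n)
    rw [hH, AddSubgroup.index_ker, AddMonoidHom.range_eq_top.2 hsurj]
    simp
  have : H.FiniteIndex := ⟨by rw [hidx]; exact pow_ne_zero _ (Fact.out : p.Prime).ne_zero⟩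
  have h := H.index_mul_measure (hHb ▸ measurableSet_padicBall 0 n) μ
  rw [hHb, hidx, measure_univ] at h
  have h' := congrArg ENNReal.toReal h
  rw [ENNReal.toReal_mul] at h'
  simp only [ENNReal.toReal_natCast, ENNReal.toReal_one] at h'
  rw [Measure.real, h0, eq_div_iff (pow_ne_zero _ hp0), mul_comm]
  exact_mod_cast h'

/-! ### Square roots in `ℤ_p` -/

lemma eq_unitPart_mul {s : ℤ_[p]} (hs : s ≠ 0) :
    s = s.unitPart * (p : ℤ_[p]) ^ s.valuation := by
  rw [PadicInt.unitPart, dif_neg hs]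
  exact PadicInt.unitCoeff_spec hs

lemma isUnit_unitPart {s : ℤ_[p]} (hs : s ≠ 0) : IsUnit s.unitPart := by
  rw [PadicInt.unitPart, dif_neg hs]
  exact Units.isUnit _

lemma toZMod_eq_zero_iff (x : ℤ_[p]) : PadicInt.toZMod x = 0 ↔ (p : ℤ_[p]) ∣ x := by
  rw [← RingHom.mem_ker, PadicInt.ker_toZMod, PadicInt.maximalIdeal_eq_span_p,
    Ideal.mem_span_singleton]

lemma not_dvd_of_isUnit {x : ℤ_[p]} (hx : IsUnit x) : ¬ (p : ℤ_[p]) ∣ x :=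
  fun h => PadicInt.prime_p.not_isUnit (isUnit_of_dvd_unit h hx)

lemma not_dvd_two (hp : 5 ≤ p) : ¬ (p : ℤ_[p]) ∣ 2 := by
  intro h
  have h' := (PadicInt.pow_p_dvd_int_iff (p := p) 1 2).1 (by simpa using h)
  rw [pow_one] at h'
  have := Int.le_of_dvd (by norm_num) h'
  omega

/-- Hensel's lemma for `X² − u`, at a lift of a square root of `u` modulo `p`. -/
lemma exists_sqrt_unit (hp : 5 ≤ p) {u : ℤ_[p]} (hu : IsUnit u)
    (hsq : IsSquare (PadicInt.toZMod u)) : ∃ z : ℤ_[p], z ^ 2 = u := by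
  obtain ⟨c, hc⟩ := hsq
  obtain ⟨a, rfl⟩ := ZMod.ringHom_surjective (PadicInt.toZMod (p := p)) c
  have hdvd : (p : ℤ_[p]) ∣ a ^ 2 - u := by
    rw [← toZMod_eq_zero_iff, map_sub, hc, map_pow]; ring
  have ha : ¬ (p : ℤ_[p]) ∣ a := by
    intro h
    apply not_dvd_of_isUnit hu
    have := dvd_sub (dvd_pow h two_ne_zero) hdvd
    simpa using this
  have h2a : ‖2 * a‖ = 1 := by
    refine le_antisymm (PadicInt.norm_le_one _) (not_lt.1 fun h => ?_)
    rcases PadicInt.prime_p.dvd_or_dvd ((PadicInt.norm_lt_one_iff_dvd _).1 h) with h | h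
    exacts [not_dvd_two hp h, ha h]
  obtain ⟨z, hz, -⟩ := hensels_lemma (p := p) (R := ℤ_[p])
    (F := Polynomial.X ^ 2 - Polynomial.C u) (a := a) (by
      have := (PadicInt.norm_lt_one_iff_dvd _).2 hdvd
      simpa [one_add_one_eq_two, h2a] using this)
  exact ⟨z, by simpa [sub_eq_zero] using hz⟩

lemma exists_sqrt (hp : 5 ≤ p) {s : ℤ_[p]} (hs : s ≠ 0) {m : ℕ} (hm : s.valuation = 2 * m)
    (hsq : IsSquare (PadicInt.toZMod s.unitPart)) :
    ∃ z : ℤ_[p], ¬ (p : ℤ_[p]) ∣ z ∧ ((p : ℤ_[p]) ^ m * z) ^ 2 = s := by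
  obtain ⟨z, hz⟩ := exists_sqrt_unit hp (isUnit_unitPart hs) hsq
  refine ⟨z, fun h => ?_, ?_⟩
  · exact not_dvd_of_isUnit (isUnit_unitPart hs) (hz ▸ dvd_pow h two_ne_zero)
  · conv_rhs => rw [eq_unitPart_mul hs, hm, ← hz]
    ring

/-! ### Shape of the level sets -/

lemma levelSet_zero {s : ℤ_[p]} (hs : s ≠ 0) {m : ℕ} (hm : s.valuation = 2 * m) :
    levelSet s m 0 = padicBall 0 m \ padicBall 0 (m + 1) := by
  ext t
  simp only [levelSet, padicBall, Set.mem_ofPred_eq, Set.mem_sdiff, sub_zero, add_zero]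
  refine ⟨fun h => ⟨h.1, h.2.1⟩, fun h => ⟨h.1, h.2, dvd_sub ?_ ?_⟩⟩
  · rw [mul_comm 2 m, pow_mul]; exact pow_dvd_pow_of_dvd h.1 2
  · exact (pow_dvd_iff_le_valuation hs _).2 hm.ge

lemma levelSet_eq_empty {s : ℤ_[p]} (hs : s ≠ 0) {m : ℕ} (hm : s.valuation = 2 * m)
    (hsq : ¬ IsSquare (PadicInt.toZMod s.unitPart)) {j : ℕ} (hj : 1 ≤ j) :
    levelSet s m j = ∅ := by
  rw [Set.eq_empty_iff_forall_notMem]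
  rintro t ⟨⟨y, rfl⟩, -, h⟩
  apply hsq
  have h1 : (p : ℤ_[p]) ^ (2 * m) * p ∣ (p : ℤ_[p]) ^ (2 * m) * (y ^ 2 - s.unitPart) := by
    rw [← pow_succ]
    refine (pow_dvd_pow _ (by omega)).trans (h.trans (dvd_of_eq ?_))
    conv_lhs => rw [eq_unitPart_mul hs, hm]
    ring
  have h2 := (toZMod_eq_zero_iff _).2
    ((mul_dvd_mul_iff_left (pow_ne_zero _ PadicInt.prime_p.ne_zero)).1 h1)
  rw [map_sub, map_pow, sub_eq_zero] at h2
  exact ⟨_, by rw [← h2, sq]⟩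

lemma pow_mul_mem_padicBall_iff (m j : ℕ) (y z : ℤ_[p]) :
    (p : ℤ_[p]) ^ m * y ∈ padicBall ((p : ℤ_[p]) ^ m * z) (m + j) ↔ (p : ℤ_[p]) ^ j ∣ y - z := by
  rw [padicBall, Set.mem_ofPred_eq, ← mul_sub, pow_add,
    mul_dvd_mul_iff_left (pow_ne_zero _ PadicInt.prime_p.ne_zero)]

/-- For `y, z` with `z` a unit and `j ≥ 1`, the prime `p ∤ 2z` cannot divide both factors of
`y² − z² = (y − z)(y + z)`, so `p^j` divides one of them as soon as it divides the product. -/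
lemma unit_levelSet (hp : 5 ≤ p) {z : ℤ_[p]} (hz : ¬ (p : ℤ_[p]) ∣ z) {j : ℕ} (hj : 1 ≤ j)
    (y : ℤ_[p]) : (¬ (p : ℤ_[p]) ∣ y ∧ (p : ℤ_[p]) ^ j ∣ y ^ 2 - z ^ 2) ↔
      ((p : ℤ_[p]) ^ j ∣ y - z ∨ (p : ℤ_[p]) ^ j ∣ y - -z) := by
  have hpj : (p : ℤ_[p]) ∣ (p : ℤ_[p]) ^ j := dvd_pow_self _ (by omega)
  have hfac : y ^ 2 - z ^ 2 = (y - z) * (y - -z) := by ring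
  constructor
  · rintro ⟨-, h⟩
    rw [hfac] at h
    by_cases h1 : (p : ℤ_[p]) ∣ y - z
    · left
      refine PadicInt.prime_p.pow_dvd_of_dvd_mul_right j (fun h2 => ?_) h
      have h3 : (p : ℤ_[p]) ∣ 2 * z := by
        have := dvd_sub h2 h1
        rwa [show y - -z - (y - z) = 2 * z by ring] at this
      rcases PadicInt.prime_p.dvd_or_dvd h3 with h | h
      exacts [not_dvd_two hp h, hz h]
    · right
      exact PadicInt.prime_p.pow_dvd_of_dvd_mul_left j h1 h
  · rintro (h | h)
    · refine ⟨fun hy => hz ?_, hfac ▸ h.mul_right _⟩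
      simpa using dvd_sub hy (hpj.trans h)
    · refine ⟨fun hy => hz ?_, hfac ▸ h.mul_left _⟩
      simpa using dvd_sub (hpj.trans h) hy

lemma levelSet_eq_union (hp : 5 ≤ p) (m : ℕ) {z : ℤ_[p]} (hz : ¬ (p : ℤ_[p]) ∣ z) {j : ℕ}
    (hj : 1 ≤ j) : levelSet (((p : ℤ_[p]) ^ m * z) ^ 2) m j =
      padicBall ((p : ℤ_[p]) ^ m * z) (m + j) ∪ padicBall ((p : ℤ_[p]) ^ m * -z) (m + j) := by
  have hpm : ∀ n, (p : ℤ_[p]) ^ n ≠ 0 := fun n => pow_ne_zero _ PadicInt.prime_p.ne_zero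
  ext t
  by_cases ht : (p : ℤ_[p]) ^ m ∣ t
  · obtain ⟨y, rfl⟩ := ht
    rw [Set.mem_union, pow_mul_mem_padicBall_iff, pow_mul_mem_padicBall_iff,
      ← unit_levelSet hp hz hj, levelSet, Set.mem_ofPred_eq, pow_succ,
      mul_dvd_mul_iff_left (hpm m), pow_add,
      show ((p : ℤ_[p]) ^ m * y) ^ 2 - ((p : ℤ_[p]) ^ m * z) ^ 2 =
        (p : ℤ_[p]) ^ (2 * m) * (y ^ 2 - z ^ 2) by ring, mul_dvd_mul_iff_left (hpm _)]
    simp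
  · have key : ∀ w : ℤ_[p], t ∉ padicBall ((p : ℤ_[p]) ^ m * w) (m + j) := by
      intro w h
      have h1 : (p : ℤ_[p]) ^ m ∣ t - (p : ℤ_[p]) ^ m * w :=
        (pow_dvd_pow _ (Nat.le_add_right m j)).trans h
      exact ht ((dvd_sub_left (dvd_mul_right _ _)).1 h1)
    simp only [levelSet, Set.mem_ofPred_eq, Set.mem_union, ht, key, false_and, or_self]

lemma disjoint_padicBall (hp : 5 ≤ p) (m : ℕ) {z : ℤ_[p]} (hz : ¬ (p : ℤ_[p]) ∣ z) {j : ℕ}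
    (hj : 1 ≤ j) : Disjoint (padicBall ((p : ℤ_[p]) ^ m * z) (m + j))
      (padicBall ((p : ℤ_[p]) ^ m * -z) (m + j)) := by
  rw [Set.disjoint_left]
  intro t h1 h2
  have h3 := dvd_sub h2 h1
  -- A common point would force `p^{m+j} ∣ 2 p^m z`.
  rw [show t - (p : ℤ_[p]) ^ m * -z - (t - (p : ℤ_[p]) ^ m * z) = (p : ℤ_[p]) ^ m * (2 * z) by ring,
    pow_add, mul_dvd_mul_iff_left (pow_ne_zero _ PadicInt.prime_p.ne_zero)] at h3
  rcases PadicInt.prime_p.dvd_or_dvd ((dvd_pow_self _ (by omega : j ≠ 0)).trans h3) with h | h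
  exacts [not_dvd_two hp h, hz h]

/-! ### Measures of the level sets -/

section Measure

variable [MeasurableSpace ℤ_[p]] [BorelSpace ℤ_[p]]

lemma measurableSet_levelSet (s : ℤ_[p]) (m j : ℕ) : MeasurableSet (levelSet s m j) := by
  have h : levelSet s m j = (padicBall 0 m \ padicBall 0 (m + 1)) ∩
      (fun t => t ^ 2) ⁻¹' padicBall s (2 * m + j) := by
    ext t; simp [levelSet, padicBall, and_assoc]
  rw [h]
  exact ((measurableSet_padicBall _ _).diff (measurableSet_padicBall _ _)).inter
    ((continuous_pow 2).measurable (measurableSet_padicBall _ _))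

variable (μ : Measure ℤ_[p]) [IsProbabilityMeasure μ]

/-- `S_k` is the difference of consecutive level sets. -/
lemma measure_eq_sub (s : ℤ_[p]) {m : ℕ} (hm : s.valuation = 2 * m) (k : ℕ) :
    μ {t : ℤ_[p] | t ≠ 0 ∧ 2 * t.valuation = s.valuation ∧
        t ^ 2 - s ≠ 0 ∧ (t ^ 2 - s).valuation = s.valuation + k} =
      ENNReal.ofReal (μ.real (levelSet s m k) - μ.real (levelSet s m (k + 1))) := by
  have hset : {t : ℤ_[p] | t ≠ 0 ∧ 2 * t.valuation = s.valuation ∧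
      t ^ 2 - s ≠ 0 ∧ (t ^ 2 - s).valuation = s.valuation + k} =
      levelSet s m k \ levelSet s m (k + 1) := by
    ext t
    have h1 := valuation_eq_iff t m
    have h2 := valuation_eq_iff (t ^ 2 - s) (2 * m + k)
    have h3 : 2 * t.valuation = 2 * m ↔ t.valuation = m := by omega
    simp only [levelSet, Set.mem_ofPred_eq, Set.mem_sdiff, hm, h3, ← add_assoc]
    tauto
  have hsub : levelSet s m (k + 1) ⊆ levelSet s m k := fun t ht =>
    ⟨ht.1, ht.2.1, (pow_dvd_pow _ (by omega)).trans ht.2.2⟩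
  rw [hset, ← measureReal_sdiff hsub (measurableSet_levelSet _ _ _), ofReal_measureReal]

variable [μ.IsAddHaarMeasure]

lemma measureReal_levelSet_zero {s : ℤ_[p]} (hs : s ≠ 0) {m : ℕ} (hm : s.valuation = 2 * m) :
    μ.real (levelSet s m 0) = 1 / (p : ℝ) ^ m - 1 / (p : ℝ) ^ (m + 1) := by
  rw [levelSet_zero hs hm, measureReal_sdiff _ (measurableSet_padicBall _ _),
    measureReal_padicBall, measureReal_padicBall]
  intro t ht
  exact (pow_dvd_pow _ (Nat.le_succ m)).trans ht

lemma measureReal_levelSet_of_isSquare (hp : 5 ≤ p) {s : ℤ_[p]} (hs : s ≠ 0) {m : ℕ}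
    (hm : s.valuation = 2 * m) (hsq : IsSquare (PadicInt.toZMod s.unitPart)) {j : ℕ}
    (hj : 1 ≤ j) : μ.real (levelSet s m j) = 2 / (p : ℝ) ^ (m + j) := by
  obtain ⟨z, hz, rfl⟩ := exists_sqrt hp hs hm hsq
  rw [levelSet_eq_union hp m hz hj, measureReal_union (disjoint_padicBall hp m hz hj)
    (measurableSet_padicBall _ _), measureReal_padicBall, measureReal_padicBall]
  ring

end Measure

/-- Translates the right-hand sides, with their truncated subtraction in `ENNReal`, to real
numbers. -/
lemma ofReal_sub_div (p c n : ℕ) (hp : 0 < p) (hc : c ≤ p) :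
    ENNReal.ofReal (((p : ℝ) - c) / (p : ℝ) ^ n) = ((p : ENNReal) - c) / (p : ENNReal) ^ n := by
  have hp' : (0 : ℝ) < p := by exact_mod_cast hp
  rw [ENNReal.ofReal_div_of_pos (by positivity), ENNReal.ofReal_pow hp'.le,
    ENNReal.ofReal_natCast, ← Nat.cast_sub hc, ENNReal.ofReal_natCast, ENNReal.natCast_sub]

end MeasureSk

/-! ### The measure of `S_k` -/

/-- For a prime `p ≥ 5` and nonzero `s ∈ ℤ_p`, the Haar measure of
`S_k = {t : 2ν_p(t) = ν_p(s), ν_p(t²−s) = ν_p(s)+k}`. -/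
theorem measure_Sk (p : ℕ) [Fact p.Prime] (hp : 5 ≤ p)
    [MeasurableSpace ℤ_[p]] [BorelSpace ℤ_[p]]
    (μ : Measure ℤ_[p]) [μ.IsAddHaarMeasure] [IsProbabilityMeasure μ]
    (s : ℤ_[p]) (hs : s ≠ 0) (k : ℕ) :
    (Odd s.valuation →
      μ {t : ℤ_[p] | t ≠ 0 ∧ 2 * t.valuation = s.valuation ∧
          t ^ 2 - s ≠ 0 ∧ (t ^ 2 - s).valuation = s.valuation + k} = 0) ∧
    (∀ m : ℕ, s.valuation = 2 * m →
      (¬ IsSquare (PadicInt.toZMod s.unitPart) →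
        (k = 0 →
          μ {t : ℤ_[p] | t ≠ 0 ∧ 2 * t.valuation = s.valuation ∧
              t ^ 2 - s ≠ 0 ∧ (t ^ 2 - s).valuation = s.valuation + k} =
            ((p : ENNReal) - 1) / (p : ENNReal) ^ (m + 1)) ∧
        (1 ≤ k →
          μ {t : ℤ_[p] | t ≠ 0 ∧ 2 * t.valuation = s.valuation ∧
              t ^ 2 - s ≠ 0 ∧ (t ^ 2 - s).valuation = s.valuation + k} = 0)) ∧
      (IsSquare (PadicInt.toZMod s.unitPart) →
        (k = 0 →
          μ {t : ℤ_[p] | t ≠ 0 ∧ 2 * t.valuation = s.valuation ∧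
              t ^ 2 - s ≠ 0 ∧ (t ^ 2 - s).valuation = s.valuation + k} =
            ((p : ENNReal) - 3) / (p : ENNReal) ^ (m + 1)) ∧
        (1 ≤ k →
          μ {t : ℤ_[p] | t ≠ 0 ∧ 2 * t.valuation = s.valuation ∧
              t ^ 2 - s ≠ 0 ∧ (t ^ 2 - s).valuation = s.valuation + k} =
            2 * ((p : ENNReal) - 1) / (p : ENNReal) ^ (m + k + 1)))) := by
  have hp0 : (p : ℝ) ≠ 0 := by exact_mod_cast (by omega : p ≠ 0)
  refine ⟨fun hodd => ?_, fun m hm => ⟨fun hsq => ⟨fun hk => ?_, fun hk => ?_⟩,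
    fun hsq => ⟨fun hk => ?_, fun hk => ?_⟩⟩⟩
  · convert measure_empty (μ := μ)
    rw [Set.eq_empty_iff_forall_notMem]
    rintro t ⟨-, ht, -⟩
    obtain ⟨a, ha⟩ := hodd
    omega
  · subst hk
    rw [MeasureSk.measure_eq_sub μ s hm, MeasureSk.levelSet_eq_empty hs hm hsq le_rfl,
      MeasureSk.measureReal_levelSet_zero μ hs hm, measureReal_empty]
    have h := MeasureSk.ofReal_sub_div p 1 (m + 1) (by omega) (by omega)
    rw [Nat.cast_one, Nat.cast_one] at h
    rw [← h]
    congr 1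
    field_simp
    ring
  · rw [MeasureSk.measure_eq_sub μ s hm, MeasureSk.levelSet_eq_empty hs hm hsq hk,
      MeasureSk.levelSet_eq_empty hs hm hsq (by omega : 1 ≤ k + 1)]
    simp
  · subst hk
    rw [MeasureSk.measure_eq_sub μ s hm,
      MeasureSk.measureReal_levelSet_of_isSquare μ hp hs hm hsq le_rfl,
      MeasureSk.measureReal_levelSet_zero μ hs hm]
    have h := MeasureSk.ofReal_sub_div p 3 (m + 1) (by omega) (by omega)
    rw [Nat.cast_ofNat, Nat.cast_ofNat] at h
    rw [← h]
    congr 1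
    field_simp
    ring
  · rw [MeasureSk.measure_eq_sub μ s hm,
      MeasureSk.measureReal_levelSet_of_isSquare μ hp hs hm hsq hk,
      MeasureSk.measureReal_levelSet_of_isSquare μ hp hs hm hsq (by omega : 1 ≤ k + 1)]
    have h := MeasureSk.ofReal_sub_div p 1 (m + k + 1) (by omega) (by omega)
    rw [Nat.cast_one, Nat.cast_one] at h
    rw [mul_div_assoc, ← h, ← ENNReal.ofReal_ofNat 2, ← ENNReal.ofReal_mul (by norm_num)]
    congr 1
    field_simp
    ring
end

section
/- Let p ≥ 5 be a prime, s ∈ ℤ_p nonzero with ν_p(s) = 2m even, and k ≥ 1 an integer. Set S_k^* := {t ∈ ℤ_p : ν_p(t) = m and ν_p(t² − s) ≥ 2m + k}. Then μ(S_k^*) = 0 if s_p is not a quadratic residue modulo p, and μ(S_k^*) = 2/p^{m+k} if s_p is a quadratic residue modulo p. -/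
/-!
Write `s = p ^ (2m) * u` and `t = p ^ m * v` with `u`, `v` units. The condition on `t` becomes
`p ^ k ∣ v ^ 2 - u`. As `k ≥ 1`, this forces `u` to be a square modulo `p`, so the set is empty when
`u` is a non-residue. When `u` is a residue, Hensel's lemma (`p` is odd) gives `u = w ^ 2` in `ℤ_p`;
then `p ^ k ∣ (v - w) * (v + w)`, and `p` cannot divide both factors since it does not divide `2 * w`.
Hence the set is the union of the two closed balls of radius `p ^ (-(m + k))` around `p ^ m * w` and
`-p ^ m * w` (`mem_Sk_star_iff`). They are disjoint, and each has measure `p ^ (-(m + k))`, because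
`ℤ_p` is the disjoint union of `p ^ n` translates of the ball of radius `p ^ (-n)`
(`measure_setOf_pow_dvd_sub`).
-/

open MeasureTheory Classical

namespace PadicInt

variable {p : ℕ} [Fact p.Prime]

lemma ne_zero_and_valuation_eq_iff (t : ℤ_[p]) (m : ℕ) :
    (t ≠ 0 ∧ t.valuation = m) ↔ ∃ v : ℤ_[p], IsUnit v ∧ t = (p : ℤ_[p]) ^ m * v := by
  constructor
  · rintro ⟨h0, rfl⟩
    exact ⟨unitCoeff h0, Units.isUnit _, by rw [mul_comm]; exact unitCoeff_spec h0⟩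
  · rintro ⟨v, hv, rfl⟩
    have hv0 : v ≠ 0 := hv.ne_zero
    refine ⟨mul_ne_zero (pow_ne_zero _ (NeZero.ne _)) hv0, ?_⟩
    have hval : v.valuation = 0 := by
      by_contra h
      have h1 : (p : ℤ_[p]) ∣ v := by
        have := (mem_span_pow_iff_le_valuation v hv0 1).2 (Nat.one_le_iff_ne_zero.2 h)
        rwa [pow_one, Ideal.mem_span_singleton] at this
      exact prime_p.not_isUnit (isUnit_of_dvd_unit h1 hv)
    rw [valuation_p_pow_mul _ _ hv0, hval, add_zero]

lemma eq_zero_or_le_valuation_iff (x : ℤ_[p]) (n : ℕ) :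
    (x = 0 ∨ n ≤ x.valuation) ↔ (p : ℤ_[p]) ^ n ∣ x := by
  by_cases hx : x = 0
  · simp [hx]
  · rw [← Ideal.mem_span_singleton, mem_span_pow_iff_le_valuation x hx]
    simp [hx]

lemma isUnit_iff_not_p_dvd (x : ℤ_[p]) : IsUnit x ↔ ¬ (p : ℤ_[p]) ∣ x := by
  rw [← norm_lt_one_iff_dvd, ← not_isUnit_iff, not_not]

lemma toZMod_eq_zero_iff_p_dvd (x : ℤ_[p]) : toZMod x = 0 ↔ (p : ℤ_[p]) ∣ x := by
  rw [← RingHom.mem_ker, ker_toZMod, maximalIdeal_eq_span_p, Ideal.mem_span_singleton]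

lemma isUnit_two (hp : 5 ≤ p) : IsUnit (2 : ℤ_[p]) := by
  rw [isUnit_iff_not_p_dvd, ← toZMod_eq_zero_iff_p_dvd]
  intro h
  have h2 : ((2 : ℕ) : ZMod p) = 0 := by
    rw [← map_natCast (toZMod : ℤ_[p] →+* ZMod p)]
    exact h
  rw [ZMod.natCast_eq_zero_iff] at h2
  exact absurd (Nat.le_of_dvd (by norm_num) h2) (by omega)

/-- Hensel's lemma for `X ^ 2 - u`. -/
lemma exists_sq_eq_of_isSquare_toZMod (hp : 5 ≤ p) {u : ℤ_[p]} (hu : IsUnit u)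
    (hsq : IsSquare (toZMod u)) : ∃ w : ℤ_[p], IsUnit w ∧ w ^ 2 = u := by
  obtain ⟨b, hb⟩ := hsq
  obtain ⟨a, rfl⟩ := ZMod.ringHom_surjective (toZMod : ℤ_[p] →+* ZMod p) b
  have hdvd : (p : ℤ_[p]) ∣ a ^ 2 - u := by
    rw [← toZMod_eq_zero_iff_p_dvd, map_sub, map_pow, hb]
    ring
  have ha : IsUnit a := by
    rw [isUnit_iff_not_p_dvd] at hu ⊢
    intro h
    exact hu ((dvd_sub_right (dvd_pow h two_ne_zero)).1 hdvd)
  have h2a : ‖2 * a‖ = 1 := isUnit_iff.1 ((isUnit_two hp).mul ha)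
  have hder : (Polynomial.X ^ 2 - Polynomial.C u : Polynomial ℤ_[p]).derivative.aeval a
      = 2 * a := by
    simp [one_add_one_eq_two]
  have hev (z : ℤ_[p]) :
      (Polynomial.X ^ 2 - Polynomial.C u : Polynomial ℤ_[p]).aeval z = z ^ 2 - u := by
    simp
  obtain ⟨w, hw, -⟩ := hensels_lemma (F := Polynomial.X ^ 2 - Polynomial.C u) (a := a) (by
    rw [hder, h2a, hev, one_pow]
    exact (norm_lt_one_iff_dvd _).2 hdvd)
  rw [hev, sub_eq_zero] at hw
  refine ⟨w, ?_, hw⟩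
  rw [← hw] at hu
  exact (isUnit_pow_iff two_ne_zero).1 hu

lemma setOf_pow_dvd_sub_eq_closedBall (n : ℕ) (r : ℤ_[p]) :
    {t : ℤ_[p] | (p : ℤ_[p]) ^ n ∣ t - r} = Metric.closedBall r ((p : ℝ) ^ (-n : ℤ)) := by
  ext t
  rw [Metric.mem_closedBall, dist_eq_norm, norm_le_pow_iff_mem_span_pow, Ideal.mem_span_singleton]
  rfl

lemma measurableSet_setOf_pow_dvd_sub [MeasurableSpace ℤ_[p]] [BorelSpace ℤ_[p]]
    (n : ℕ) (r : ℤ_[p]) : MeasurableSet {t : ℤ_[p] | (p : ℤ_[p]) ^ n ∣ t - r} := by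
  rw [setOf_pow_dvd_sub_eq_closedBall]
  exact measurableSet_closedBall

/-- A residue class modulo `p ^ n` has measure `p ^ (-n)`: the `p ^ n` classes are translates of
each other and partition `ℤ_p`. -/
lemma measure_setOf_pow_dvd_sub [MeasurableSpace ℤ_[p]] [BorelSpace ℤ_[p]]
    (μ : Measure ℤ_[p]) [μ.IsAddHaarMeasure] [IsProbabilityMeasure μ] (n : ℕ) (r : ℤ_[p]) :
    μ {t : ℤ_[p] | (p : ℤ_[p]) ^ n ∣ t - r} = ((p : ENNReal) ^ n)⁻¹ := by
  have htrans (r : ℤ_[p]) : μ {t : ℤ_[p] | (p : ℤ_[p]) ^ n ∣ t - r} =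
      μ {t : ℤ_[p] | (p : ℤ_[p]) ^ n ∣ t - 0} := by
    rw [← measure_preimage_add_right μ (-r) {t : ℤ_[p] | (p : ℤ_[p]) ^ n ∣ t - 0}]
    simp [sub_eq_add_neg]
  have hfib (r : ℤ_[p]) : (toZModPow n : ℤ_[p] →+* ZMod (p ^ n)) ⁻¹' {toZModPow n r} =
      {t : ℤ_[p] | (p : ℤ_[p]) ^ n ∣ t - r} := by
    ext t
    simp only [Set.mem_preimage, Set.mem_singleton_iff, Set.mem_ofPred_eq]
    rw [← sub_eq_zero, ← map_sub, ← RingHom.mem_ker, ker_toZModPow, Ideal.mem_span_singleton]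
  have hsurj := ZMod.ringHom_surjective (toZModPow n : ℤ_[p] →+* ZMod (p ^ n))
  have hpn : p ^ n ≠ 0 := pow_ne_zero _ (NeZero.ne p)
  have : NeZero (p ^ n) := ⟨hpn⟩
  have hsum : μ Set.univ = ∑ a : ZMod (p ^ n),
      μ ((toZModPow n : ℤ_[p] →+* ZMod (p ^ n)) ⁻¹' {a}) := by
    rw [← tsum_fintype (L := .unconditional _), ← measure_iUnion]
    · congr 1
      ext t
      simp
    · intro a b hab
      exact Disjoint.preimage _ (by simpa using hab)
    · intro a
      obtain ⟨x, rfl⟩ := hsurj a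
      rw [hfib]
      exact measurableSet_setOf_pow_dvd_sub n x
  have hconst (a : ZMod (p ^ n)) : μ ((toZModPow n : ℤ_[p] →+* ZMod (p ^ n)) ⁻¹' {a}) =
      μ {t : ℤ_[p] | (p : ℤ_[p]) ^ n ∣ t - 0} := by
    obtain ⟨x, rfl⟩ := hsurj a
    rw [hfib, htrans]
  rw [htrans]
  simp only [hconst, measure_univ, Finset.sum_const, Finset.card_univ, ZMod.card,
    nsmul_eq_mul, Nat.cast_pow] at hsum
  refine ENNReal.eq_inv_of_mul_eq_one_left ?_
  rw [mul_comm]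
  exact hsum.symm

/-- The residue class of `p ^ m * w` modulo `p ^ (m + k)` lies in `S_k^*` for
`s = (p ^ m * w) ^ 2`. -/
lemma mem_Sk_star_of_dvd_sub {m k : ℕ} (hk : 1 ≤ k) {t w : ℤ_[p]} (hw : IsUnit w)
    (h : (p : ℤ_[p]) ^ (m + k) ∣ t - p ^ m * w) :
    (∃ v : ℤ_[p], IsUnit v ∧ t = (p : ℤ_[p]) ^ m * v) ∧
      (p : ℤ_[p]) ^ (2 * m + k) ∣ t ^ 2 - (p ^ m * w) ^ 2 := by
  obtain ⟨c, hc⟩ := h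
  have ht : t = (p : ℤ_[p]) ^ m * (w + p ^ k * c) := by
    linear_combination hc
  refine ⟨⟨_, ?_, ht⟩, c * (w + p ^ k * c + w), ?_⟩
  · rw [isUnit_iff_not_p_dvd] at hw ⊢
    intro h
    exact hw ((dvd_add_left ((dvd_pow_self _ (by omega)).mul_right c)).1 h)
  · rw [ht]
    ring

/-- For `s = (p ^ m * w) ^ 2`, the set `S_k^*` is the union of the residue classes modulo
`p ^ (m + k)` of the two square roots `± p ^ m * w` of `s`. -/
lemma mem_Sk_star_iff (hp : 5 ≤ p) {m k : ℕ} (hk : 1 ≤ k) (t : ℤ_[p]) {w : ℤ_[p]}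
    (hw : IsUnit w) :
    ((∃ v : ℤ_[p], IsUnit v ∧ t = (p : ℤ_[p]) ^ m * v) ∧
      (p : ℤ_[p]) ^ (2 * m + k) ∣ t ^ 2 - (p ^ m * w) ^ 2) ↔
    (p : ℤ_[p]) ^ (m + k) ∣ t - p ^ m * w ∨ (p : ℤ_[p]) ^ (m + k) ∣ t - p ^ m * -w := by
  have hp0 (n : ℕ) : (p : ℤ_[p]) ^ n ≠ 0 := pow_ne_zero _ (NeZero.ne _)
  constructor
  · rintro ⟨⟨v, hv, rfl⟩, h⟩
    have h1 : (p : ℤ_[p]) ^ k ∣ (v - w) * (v + w) := by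
      have e : ((p : ℤ_[p]) ^ m * v) ^ 2 - (p ^ m * w) ^ 2 =
        p ^ (2 * m) * ((v - w) * (v + w)) := by ring
      rwa [e, pow_add, mul_dvd_mul_iff_left (hp0 _)] at h
    rw [← mul_sub, ← mul_sub, pow_add, mul_dvd_mul_iff_left (hp0 _),
      mul_dvd_mul_iff_left (hp0 _), sub_neg_eq_add]
    by_cases hd : (p : ℤ_[p]) ∣ v - w
    · left
      have hu : IsUnit (v + w) := by
        rw [isUnit_iff_not_p_dvd]
        intro h'
        have h2w : (p : ℤ_[p]) ∣ 2 * w := by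
          have := dvd_sub h' hd
          rwa [show v + w - (v - w) = 2 * w by ring] at this
        exact (isUnit_iff_not_p_dvd _).1 ((isUnit_two hp).mul hw) h2w
      exact hu.dvd_mul_right.1 h1
    · right
      exact ((isUnit_iff_not_p_dvd _).2 hd).dvd_mul_left.1 h1
  · rintro (h | h)
    · exact mem_Sk_star_of_dvd_sub hk hw h
    · simpa using mem_Sk_star_of_dvd_sub hk hw.neg h

end PadicInt

/-- For a prime `p ≥ 5`, nonzero `s ∈ ℤ_p` with `ν_p(s) = 2m` even and
`k ≥ 1`, the Haar measure of `S_k^* = {t : ν_p(t) = m, ν_p(t²−s) ≥ 2m+k}` is `0` if `s_p`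
is not a quadratic residue mod `p`, and `2/p^(m+k)` if it is. -/
theorem measure_Sk_star (p : ℕ) [Fact p.Prime] (hp : 5 ≤ p)
    [MeasurableSpace ℤ_[p]] [BorelSpace ℤ_[p]]
    (μ : Measure ℤ_[p]) [μ.IsAddHaarMeasure] [IsProbabilityMeasure μ]
    (s : ℤ_[p]) (hs : s ≠ 0) (m : ℕ) (hm : s.valuation = 2 * m)
    (k : ℕ) (hk : 1 ≤ k) :
    (¬ IsSquare (PadicInt.toZMod s.unitPart) →
      μ {t : ℤ_[p] | t ≠ 0 ∧ t.valuation = m ∧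
          (t ^ 2 = s ∨ (2 * m + k : ℤ) ≤ (t ^ 2 - s).valuation)} = 0) ∧
    (IsSquare (PadicInt.toZMod s.unitPart) →
      μ {t : ℤ_[p] | t ≠ 0 ∧ t.valuation = m ∧
          (t ^ 2 = s ∨ (2 * m + k : ℤ) ≤ (t ^ 2 - s).valuation)} =
        2 / (p : ENNReal) ^ (m + k)) := by
  have hunit : IsUnit s.unitPart := by
    rw [PadicInt.unitPart, dif_neg hs]
    exact Units.isUnit _
  have hsu : s = (p : ℤ_[p]) ^ (2 * m) * s.unitPart := by
    rw [PadicInt.unitPart, dif_neg hs, ← hm, mul_comm]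
    exact PadicInt.unitCoeff_spec hs
  have hset : {t : ℤ_[p] | t ≠ 0 ∧ t.valuation = m ∧
      (t ^ 2 = s ∨ (2 * m + k : ℤ) ≤ (t ^ 2 - s).valuation)} =
      {t : ℤ_[p] | (∃ v : ℤ_[p], IsUnit v ∧ t = (p : ℤ_[p]) ^ m * v) ∧
        (p : ℤ_[p]) ^ (2 * m + k) ∣ t ^ 2 - s} := by
    ext t
    rw [Set.mem_ofPred_eq, Set.mem_ofPred_eq, ← PadicInt.eq_zero_or_le_valuation_iff,
      ← PadicInt.ne_zero_and_valuation_eq_iff, and_assoc, sub_eq_zero]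
    norm_cast
  rw [hset]
  generalize s.unitPart = u at hunit hsu
  subst hsu
  have hp0 (n : ℕ) : (p : ℤ_[p]) ^ n ≠ 0 := pow_ne_zero _ (NeZero.ne _)
  constructor
  · intro hns
    convert measure_empty (μ := μ)
    rw [Set.eq_empty_iff_forall_notMem]
    rintro _ ⟨⟨v, -, rfl⟩, h⟩
    refine hns ⟨PadicInt.toZMod v, ?_⟩
    have e : ((p : ℤ_[p]) ^ m * v) ^ 2 - p ^ (2 * m) * u = p ^ (2 * m) * (v ^ 2 - u) := by ring
    rw [e, pow_add, mul_dvd_mul_iff_left (hp0 _)] at h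
    have h1 := (PadicInt.toZMod_eq_zero_iff_p_dvd _).2
      ((dvd_pow_self (p : ℤ_[p]) (by omega)).trans h)
    rw [map_sub, map_pow, sub_eq_zero] at h1
    rw [← h1, sq]
  · intro hsq
    obtain ⟨w, hw, rfl⟩ := PadicInt.exists_sq_eq_of_isSquare_toZMod hp hunit hsq
    have hunion : {t : ℤ_[p] | (∃ v : ℤ_[p], IsUnit v ∧ t = (p : ℤ_[p]) ^ m * v) ∧
        (p : ℤ_[p]) ^ (2 * m + k) ∣ t ^ 2 - p ^ (2 * m) * w ^ 2} =
        {t : ℤ_[p] | (p : ℤ_[p]) ^ (m + k) ∣ t - p ^ m * w} ∪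
          {t : ℤ_[p] | (p : ℤ_[p]) ^ (m + k) ∣ t - p ^ m * -w} := by
      ext t
      have e : (p : ℤ_[p]) ^ (2 * m) * w ^ 2 = (p ^ m * w) ^ 2 := by ring
      rw [e]
      exact PadicInt.mem_Sk_star_iff hp hk t hw
    rw [hunion, measure_union ?_ (PadicInt.measurableSet_setOf_pow_dvd_sub _ _),
      PadicInt.measure_setOf_pow_dvd_sub, PadicInt.measure_setOf_pow_dvd_sub, ← two_mul,
      ENNReal.div_eq_inv_mul, mul_comm]
    -- A common point of the two classes would give `p ∣ 2 * w`.
    rw [Set.disjoint_left]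
    intro t h1 h2
    have h3 := dvd_sub h2 h1
    rw [show t - p ^ m * -w - (t - p ^ m * w) = (p : ℤ_[p]) ^ m * (2 * w) by ring, pow_add,
      mul_dvd_mul_iff_left (hp0 _)] at h3
    exact (PadicInt.isUnit_iff_not_p_dvd _).1 ((PadicInt.isUnit_two hp).mul hw)
      ((dvd_pow_self (p : ℤ_[p]) (by omega)).trans h3)
end

section
/- Let s ∈ ℤ_3 be a unit with s ≡ 1 (mod 3), let r ∈ ℤ_3 satisfy r² = s, and let k ≥ 1 be an integer. Then the set of units d of ℤ/3^{k+2}ℤ satisfying d² ≡ s (mod 3^k) and d² ≢ s (mod 3^{k+1}) (congruences via the reduction map ℤ_3 → ℤ/3^nℤ) is exactly { ε·(r + α·3^k + β·3^{k+1}) mod 3^{k+2} : ε ∈ {1, −1}, α ∈ {1, 2}, β ∈ {0, 1, 2} }, and this set has exactly 12 elements. -/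
/-!
A class `d` modulo `3^(k+2)` lifts to some `y ∈ ℤ_3`, and the two congruences on `d` say that
`3^k`, but not `3^(k+1)`, divides `y² - r² = (y - r)(y + r)`. As `r` is a unit, `3` cannot divide
both factors, so one of them is a unit and the other, `±(±y - r)`, carries the exact power `3^k`:
`±y = r + 3^k t` with `3 ∤ t`. Only `t` modulo `9` matters modulo `3^(k+2)`, and the residues prime
to `3` are `α + 3β` with `α ∈ {1, 2}`, `β ∈ {0, 1, 2}`. Distinct triples `(ε, α, β)` give distinct
classes: `ε` is determined modulo `3` because `3 ∤ 2r`, and `α + 3β` is determined modulo `9`.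
-/

lemma toZModPow_eq_iff_dvd (n : ℕ) (x y : ℤ_[3]) :
    PadicInt.toZModPow n x = PadicInt.toZModPow n y ↔ (3 : ℤ_[3]) ^ n ∣ x - y := by
  rw [← sub_eq_zero, ← map_sub, ← RingHom.mem_ker, PadicInt.ker_toZModPow,
    Ideal.mem_span_singleton]
  norm_num

lemma castHom_toZModPow (m n : ℕ) (h : m ≤ n) (x : ℤ_[3]) :
    ZMod.castHom (pow_dvd_pow 3 h) (ZMod (3 ^ m)) (PadicInt.toZModPow n x) =
      PadicInt.toZModPow m x :=
  RingHom.congr_fun (PadicInt.zmod_cast_comp_toZModPow (p := 3) m n h) x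

lemma toZModPow_surj (n : ℕ) (d : ZMod (3 ^ n)) :
    ∃ y : ℤ_[3], PadicInt.toZModPow n y = d :=
  ⟨(d.val : ℤ_[3]), by rw [map_natCast, ZMod.natCast_zmod_val]⟩

lemma prime_three : Prime (3 : ℤ_[3]) := by
  simpa using (PadicInt.prime_p (p := 3))

lemma isUnit_iff_not_three_dvd (x : ℤ_[3]) : IsUnit x ↔ ¬ (3 : ℤ_[3]) ∣ x := by
  rw [PadicInt.isUnit_iff, ← not_iff_not, not_not]
  have h := PadicInt.norm_lt_one_iff_dvd (p := 3) x
  have h1 := PadicInt.norm_le_one x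
  push_cast at h
  rw [← h]
  exact ⟨fun h2 => lt_of_le_of_ne h1 h2, fun h2 => h2.ne⟩

lemma pow_three_dvd_intCast (n : ℕ) (a : ℤ) : (3 : ℤ_[3]) ^ n ∣ (a : ℤ_[3]) ↔ (3 : ℤ) ^ n ∣ a := by
  simpa [Ideal.mem_span_singleton] using PadicInt.pow_p_dvd_int_iff (p := 3) n a

lemma exists_digit (t : ℤ_[3]) :
    ∃ a ∈ ({0, 1, 2} : Set ℤ_[3]), ∃ w, t = a + 3 * w := by
  obtain ⟨n, hn, h⟩ := PadicInt.exists_mem_range t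
  rw [PadicInt.maximalIdeal_eq_span_p, Ideal.mem_span_singleton] at h
  obtain ⟨w, hw⟩ := h
  refine ⟨n, ?_, w, ?_⟩
  · interval_cases n <;> simp
  · push_cast at hw
    linear_combination hw

/-- Modulo `3^(k+2)`, only the first two `3`-adic digits `α`, `β` of `t` matter; `α ≠ 0` as `3 ∤ t`. -/
lemma exists_digits (r t y : ℤ_[3]) (k : ℕ) (ht : ¬ (3 : ℤ_[3]) ∣ t) (hy : y = r + 3 ^ k * t) :
    ∃ α ∈ ({1, 2} : Set ℤ_[3]), ∃ β ∈ ({0, 1, 2} : Set ℤ_[3]),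
      (3 : ℤ_[3]) ^ (k + 2) ∣ y - (r + α * 3 ^ k + β * 3 ^ (k + 1)) := by
  obtain ⟨a, ha, w, rfl⟩ := exists_digit t
  obtain ⟨b, hb, v, rfl⟩ := exists_digit w
  refine ⟨a, ?_, b, hb, v, by rw [hy]; ring⟩
  rcases ha with rfl | ha
  · exact absurd ⟨_, zero_add _⟩ ht
  · exact ha

/-- If `y + r` is a unit, the exact power `3^k` in `y² - r²` comes from `y - r`. -/
lemma exists_of_isUnit_add (r y : ℤ_[3]) (k : ℕ) (hu : ¬ (3 : ℤ_[3]) ∣ y + r)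
    (h1 : (3 : ℤ_[3]) ^ k ∣ y ^ 2 - r ^ 2) (h2 : ¬ (3 : ℤ_[3]) ^ (k + 1) ∣ y ^ 2 - r ^ 2) :
    ∃ t, ¬ (3 : ℤ_[3]) ∣ t ∧ y = r + 3 ^ k * t := by
  have h3 : (3 : ℤ_[3]) ^ k ∣ y - r := by
    rw [← isUnit_iff_not_three_dvd] at hu
    rw [← hu.dvd_mul_right]
    convert h1 using 1
    ring
  obtain ⟨t, ht⟩ := h3
  refine ⟨t, ?_, by linear_combination ht⟩
  rintro ⟨w, rfl⟩
  exact h2 ⟨w * (y + r), by linear_combination (y + r) * ht⟩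

lemma units_square_iff (r : ℤ_[3]) (hr : ¬ (3 : ℤ_[3]) ∣ r) (k : ℕ) (hk : 1 ≤ k) (y : ℤ_[3]) :
    ((3 : ℤ_[3]) ^ k ∣ y ^ 2 - r ^ 2 ∧ ¬ (3 : ℤ_[3]) ^ (k + 1) ∣ y ^ 2 - r ^ 2) ↔
    ∃ ε ∈ ({1, -1} : Set ℤ_[3]), ∃ α ∈ ({1, 2} : Set ℤ_[3]), ∃ β ∈ ({0, 1, 2} : Set ℤ_[3]),
      (3 : ℤ_[3]) ^ (k + 2) ∣ y - ε * (r + α * 3 ^ k + β * 3 ^ (k + 1)) := by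
  have h32 : ¬ (3 : ℤ_[3]) ∣ 2 := by
    have := pow_three_dvd_intCast 1 2
    norm_num at this
    exact this
  constructor
  · rintro ⟨h1, h2⟩
    by_cases hu : (3 : ℤ_[3]) ∣ y + r
    · have hu' : ¬ (3 : ℤ_[3]) ∣ -y + r := by
        intro h
        have h4 : (3 : ℤ_[3]) ∣ 2 * r := by
          convert dvd_add hu h using 1
          ring
        exact (prime_three.dvd_or_dvd h4).elim h32 hr
      obtain ⟨t, ht, hy⟩ := exists_of_isUnit_add r (-y) k hu' (by simpa using h1) (by simpa using h2)
      obtain ⟨α, hα, β, hβ, h⟩ := exists_digits r t (-y) k ht hy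
      refine ⟨-1, by simp, α, hα, β, hβ, ?_⟩
      rw [← dvd_neg]
      convert h using 1
      ring
    · obtain ⟨t, ht, hy⟩ := exists_of_isUnit_add r y k hu h1 h2
      obtain ⟨α, hα, β, hβ, h⟩ := exists_digits r t y k ht hy
      exact ⟨1, by simp, α, hα, β, hβ, by simpa using h⟩
  · rintro ⟨ε, hε, α, hα, β, -, w, hw⟩
    have hα3 : ¬ (3 : ℤ_[3]) ∣ α := by
      rcases hα with rfl | rfl
      · exact prime_three.not_dvd_one
      · exact h32
    have hε2 : ε ^ 2 = 1 := by
      rcases hε with rfl | rfl <;> norm_num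
    obtain ⟨j, rfl⟩ : ∃ j, k = j + 1 := ⟨k - 1, by omega⟩
    -- `ε * y = r + 3^k * t` with `t ≡ α` modulo `3`
    have hsq : y ^ 2 - r ^ 2 = 3 ^ (j + 1) * (2 * r * (α + 3 * (β + 3 * w * ε)) +
        3 ^ (j + 1) * (α + 3 * (β + 3 * w * ε)) ^ 2) := by
      have hy : y * ε = r + 3 ^ (j + 1) * (α + 3 * (β + 3 * w * ε)) := by
        linear_combination ε * hw + (r + α * 3 ^ (j + 1) + β * 3 ^ (j + 2)) * hε2
      have : y ^ 2 = (y * ε) ^ 2 := by rw [mul_pow, hε2, mul_one]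
      rw [this, hy]
      ring
    rw [hsq]
    refine ⟨dvd_mul_right _ _, ?_⟩
    rw [pow_succ (3 : ℤ_[3]) (j + 1), mul_dvd_mul_iff_left (pow_ne_zero _ prime_three.ne_zero)]
    rintro ⟨v, hv⟩
    have h5 : (3 : ℤ_[3]) ∣ 2 * r * α :=
      ⟨v - 2 * r * (β + 3 * w * ε) - 3 ^ j * (α + 3 * (β + 3 * w * ε)) ^ 2, by
        linear_combination hv⟩
    rcases prime_three.dvd_or_dvd h5 with h | h
    · exact (prime_three.dvd_or_dvd h).elim h32 hr
    · exact hα3 h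

/-- The parameter triples `(ε, α, β)`, as integers so that divisibility between them is decidable
arithmetic. -/
def signDigitTriples : Finset (ℤ × ℤ × ℤ) :=
  {1, -1} ×ˢ {1, 2} ×ˢ {0, 1, 2}

lemma signDigit_injOn (r : ℤ_[3]) (hr : ¬ (3 : ℤ_[3]) ∣ r) (k : ℕ) (hk : 1 ≤ k) :
    Set.InjOn (fun p : ℤ × ℤ × ℤ => PadicInt.toZModPow (p := 3) (k + 2)
      ((p.1 : ℤ_[3]) * (r + (p.2.1 : ℤ_[3]) * 3 ^ k + (p.2.2 : ℤ_[3]) * 3 ^ (k + 1))))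
      signDigitTriples := by
  rintro ⟨ε, α, β⟩ h ⟨ε', α', β'⟩ h' heq
  simp only [signDigitTriples, Finset.coe_product, Set.mem_prod, Finset.mem_coe,
    Finset.mem_insert, Finset.mem_singleton] at h h'
  obtain ⟨hε, hα, hβ⟩ := h
  obtain ⟨hε', hα', hβ'⟩ := h'
  simp only [toZModPow_eq_iff_dvd] at heq
  obtain ⟨w, hw⟩ := heq
  obtain ⟨j, rfl⟩ : ∃ j, k = j + 1 := ⟨k - 1, by omega⟩
  have hεε : ε = ε' := by
    have h1 : (3 : ℤ_[3]) ∣ ((ε - ε' : ℤ) : ℤ_[3]) * r := by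
      refine ⟨3 ^ (j + 2) * w - (ε * (α * 3 ^ j + β * 3 ^ (j + 1))
        - ε' * (α' * 3 ^ j + β' * 3 ^ (j + 1))), ?_⟩
      push_cast
      linear_combination hw
    have h2 := (prime_three.dvd_or_dvd h1).resolve_right hr
    have h3 := (pow_three_dvd_intCast 1 (ε - ε')).1 (by simpa using h2)
    omega
  subst hεε
  have hε2 : (ε : ℤ_[3]) ^ 2 = 1 := by
    rcases hε with rfl | rfl <;> norm_num
  have h9 : (3 : ℤ_[3]) ^ 2 ∣ (((α + 3 * β) - (α' + 3 * β') : ℤ) : ℤ_[3]) := by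
    rw [← mul_dvd_mul_iff_left (pow_ne_zero (j + 1) prime_three.ne_zero)]
    refine ⟨ε * w, ?_⟩
    push_cast
    linear_combination ε * hw - 3 ^ (j + 1) * ((α + 3 * β) - (α' + 3 * β') : ℤ_[3]) * hε2
  have h9' := (pow_three_dvd_intCast 2 _).1 h9
  norm_num at h9'
  have : α = α' ∧ β = β' := by omega
  simp [this]

/-- For a unit `s ∈ ℤ_3` with `s ≡ 1 (mod 3)`, a square root `r` of `s`
in `ℤ_3`, and `k ≥ 1`, the units `d` of `ℤ/3^{k+2}ℤ` with `d² ≡ s (mod 3^k)` and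
`d² ≢ s (mod 3^{k+1})` are exactly the classes of `ε(r + α·3^k + β·3^{k+1})` with
`ε ∈ {1,−1}`, `α ∈ {1,2}`, `β ∈ {0,1,2}`, and there are exactly `12` of them. -/
theorem units_square_cong_three (s : ℤ_[3]) (hs : IsUnit s)
    (hs1 : (3 : ℤ_[3]) ∣ (s - 1)) (r : ℤ_[3]) (hr : r ^ 2 = s)
    (k : ℕ) (hk : 1 ≤ k) :
    {d : ZMod (3 ^ (k + 2)) | IsUnit d ∧
        ZMod.castHom (pow_dvd_pow 3 (by omega : k ≤ k + 2)) (ZMod (3 ^ k)) (d ^ 2) =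
          PadicInt.toZModPow k s ∧
        ZMod.castHom (pow_dvd_pow 3 (by omega : k + 1 ≤ k + 2)) (ZMod (3 ^ (k + 1)))
            (d ^ 2) ≠ PadicInt.toZModPow (k + 1) s} =
      {x : ZMod (3 ^ (k + 2)) | ∃ ε ∈ ({1, -1} : Set ℤ_[3]), ∃ α ∈ ({1, 2} : Set ℤ_[3]),
        ∃ β ∈ ({0, 1, 2} : Set ℤ_[3]),
          x = PadicInt.toZModPow (k + 2) (ε * (r + α * 3 ^ k + β * 3 ^ (k + 1)))} ∧
    {d : ZMod (3 ^ (k + 2)) | IsUnit d ∧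
        ZMod.castHom (pow_dvd_pow 3 (by omega : k ≤ k + 2)) (ZMod (3 ^ k)) (d ^ 2) =
          PadicInt.toZModPow k s ∧
        ZMod.castHom (pow_dvd_pow 3 (by omega : k + 1 ≤ k + 2)) (ZMod (3 ^ (k + 1)))
            (d ^ 2) ≠ PadicInt.toZModPow (k + 1) s}.ncard = 12 := by
  subst hr
  have hr : ¬ (3 : ℤ_[3]) ∣ r := fun h =>
    (isUnit_iff_not_three_dvd _).1 hs (dvd_pow h two_ne_zero)
  rw [and_iff_left_of_imp]
  · ext d
    obtain ⟨y, rfl⟩ := toZModPow_surj (k + 2) d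
    simp only [Set.mem_ofPred_eq, ← map_pow (PadicInt.toZModPow (p := 3) (k + 2)), ne_eq,
      toZModPow_eq_iff_dvd]
    rw [castHom_toZModPow k (k + 2) (by omega), castHom_toZModPow (k + 1) (k + 2) (by omega),
      toZModPow_eq_iff_dvd, toZModPow_eq_iff_dvd, ← units_square_iff r hr k hk y,
      and_iff_right_of_imp]
    rintro ⟨h1, -⟩
    refine IsUnit.map _ ((isUnit_iff_not_three_dvd y).2 fun h => ?_)
    -- `3 ∣ y` would force `3 ∣ r²`
    have h3 := (dvd_pow_self (3 : ℤ_[3]) (by omega : k ≠ 0)).trans h1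
    rw [dvd_sub_right (dvd_pow h two_ne_zero)] at h3
    exact (isUnit_iff_not_three_dvd _).1 hs h3
  · intro h
    rw [h]
    have himg : {x : ZMod (3 ^ (k + 2)) | ∃ ε ∈ ({1, -1} : Set ℤ_[3]),
        ∃ α ∈ ({1, 2} : Set ℤ_[3]), ∃ β ∈ ({0, 1, 2} : Set ℤ_[3]),
          x = PadicInt.toZModPow (k + 2) (ε * (r + α * 3 ^ k + β * 3 ^ (k + 1)))} =
        (fun p : ℤ × ℤ × ℤ => PadicInt.toZModPow (p := 3) (k + 2)
          ((p.1 : ℤ_[3]) * (r + (p.2.1 : ℤ_[3]) * 3 ^ k + (p.2.2 : ℤ_[3]) * 3 ^ (k + 1)))) ''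
          signDigitTriples := by
      ext x
      simp only [signDigitTriples, Set.mem_ofPred_eq, Set.mem_image, Finset.mem_coe,
        Finset.mem_product, Prod.exists, Finset.mem_insert, Finset.mem_singleton,
        Set.mem_insert_iff, Set.mem_singleton_iff]
      constructor
      · rintro ⟨ε, hε, α, hα, β, hβ, rfl⟩
        obtain ⟨e, he, rfl⟩ : ∃ e : ℤ, (e = 1 ∨ e = -1) ∧ (e : ℤ_[3]) = ε := by
          rcases hε with rfl | rfl
          exacts [⟨1, by simp⟩, ⟨-1, by simp⟩]
        obtain ⟨a, ha, rfl⟩ : ∃ a : ℤ, (a = 1 ∨ a = 2) ∧ (a : ℤ_[3]) = α := by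
          rcases hα with rfl | rfl
          exacts [⟨1, by simp⟩, ⟨2, by simp⟩]
        obtain ⟨b, hb, rfl⟩ : ∃ b : ℤ, (b = 0 ∨ b = 1 ∨ b = 2) ∧ (b : ℤ_[3]) = β := by
          rcases hβ with rfl | rfl | rfl
          exacts [⟨0, by simp⟩, ⟨1, by simp⟩, ⟨2, by simp⟩]
        exact ⟨e, a, b, ⟨he, ha, hb⟩, rfl⟩
      · rintro ⟨e, a, b, ⟨he, ha, hb⟩, rfl⟩
        refine ⟨e, ?_, a, ?_, b, ?_, rfl⟩
        · exact_mod_cast he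
        · exact_mod_cast ha
        · exact_mod_cast hb
    rw [himg, (signDigit_injOn r hr k hk).ncard_image, Set.ncard_coe_finset]
    rfl
end

section
/- Let s ∈ ℤ_3 be a unit with s ≡ 1 (mod 3), let r ∈ ℤ_3 satisfy r² = s, and let k ≥ 1 be an integer. For ε ∈ {1, −1}, α ∈ {1, 2}, β ∈ {0, 1, 2}, set d := ε·(r + α·3^k + β·3^{k+1}) ∈ ℤ_3. Then ν_3(d² − s) = k, and d·(d² − s)·3^{−k} ≡ ε·2s·(α + 3β) (mod 9); in particular d·(d² − s)·3^{−k} ≡ ε·2s·α (mod 3). -/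
/-!
With `a = α + 3β` and `t = 3^k`, `d = ε(r + at)` and
`d² - s = (r + at)² - r² = t · a(2r + at)`. The cofactor `u = a(2r + at)` is not divisible by `3`,
because `3` divides `t` but none of `α`, `2`, `r`; this gives the valuation. Moreover
`d·u = εa(r + at)(2r + at) = εa(2s + 3rat + a²t²)`, and both `3t` and `t²` are divisible by `9`
since `k ≥ 1`.
-/

/-- For a unit `s ∈ ℤ_3` with `s ≡ 1 (mod 3)`, a square root `r` of `s`,
`k ≥ 1`, `ε ∈ {1,−1}`, `α ∈ {1,2}`, `β ∈ {0,1,2}`, and `d = ε(r + α·3^k + β·3^{k+1})`: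
`ν_3(d² − s) = k`, and the unit part `u = (d² − s)·3^{−k}` satisfies
`d·u ≡ ε·2s·(α + 3β) (mod 9)`; in particular `d·u ≡ ε·2s·α (mod 3)`. -/
theorem unit_part_cong_three (s : ℤ_[3]) (hs : IsUnit s)
    (hs1 : (3 : ℤ_[3]) ∣ (s - 1)) (r : ℤ_[3]) (hr : r ^ 2 = s)
    (k : ℕ) (hk : 1 ≤ k)
    (ε : ℤ) (hε : ε ∈ ({1, -1} : Set ℤ))
    (α : ℤ) (hα : α ∈ ({1, 2} : Set ℤ))
    (β : ℤ) (hβ : β ∈ ({0, 1, 2} : Set ℤ)) :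
    ((ε : ℤ_[3]) * (r + (α : ℤ_[3]) * 3 ^ k + (β : ℤ_[3]) * 3 ^ (k + 1))) ^ 2 - s ≠ 0 ∧
    (((ε : ℤ_[3]) * (r + (α : ℤ_[3]) * 3 ^ k + (β : ℤ_[3]) * 3 ^ (k + 1))) ^ 2 -
        s).valuation = (k : ℤ) ∧
    ∀ u : ℤ_[3],
      ((ε : ℤ_[3]) * (r + (α : ℤ_[3]) * 3 ^ k + (β : ℤ_[3]) * 3 ^ (k + 1))) ^ 2 - s =
        3 ^ k * u →
      ((9 : ℤ_[3]) ∣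
        ((ε : ℤ_[3]) * (r + (α : ℤ_[3]) * 3 ^ k + (β : ℤ_[3]) * 3 ^ (k + 1)) * u -
          (ε : ℤ_[3]) * 2 * s * ((α : ℤ_[3]) + 3 * (β : ℤ_[3])))) ∧
      ((3 : ℤ_[3]) ∣
        ((ε : ℤ_[3]) * (r + (α : ℤ_[3]) * 3 ^ k + (β : ℤ_[3]) * 3 ^ (k + 1)) * u -
          (ε : ℤ_[3]) * 2 * s * (α : ℤ_[3]))) := by
  obtain ⟨n, rfl⟩ : ∃ n, k = n + 1 := ⟨k - 1, by omega⟩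
  have hp : Prime (3 : ℤ_[3]) := by simpa using PadicInt.prime_p (p := 3)
  have h30 : (3 : ℤ_[3]) ≠ 0 := hp.ne_zero
  have hε2 : (ε : ℤ_[3]) ^ 2 = 1 := by
    rcases hε with rfl | rfl <;> norm_num
  have h3r : ¬ (3 : ℤ_[3]) ∣ r := fun h =>
    hp.not_isUnit (isUnit_of_dvd_unit (hr ▸ dvd_pow h two_ne_zero) hs)
  have h32 : ¬ (3 : ℤ_[3]) ∣ 2 := fun h =>
    hp.not_dvd_one (by simpa [show (3 : ℤ_[3]) - 2 = 1 by norm_num] using dvd_sub_self_left.mpr h)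
  have h3α : ¬ (3 : ℤ_[3]) ∣ (α : ℤ_[3]) := by
    rcases hα with rfl | rfl
    · simpa using hp.not_dvd_one
    · simpa using h32
  set v : ℤ_[3] := ((α : ℤ_[3]) + 3 * β) * (2 * r + (α + 3 * β) * 3 ^ (n + 1)) with hv
  have hfac : ((ε : ℤ_[3]) * (r + (α : ℤ_[3]) * 3 ^ (n + 1) + (β : ℤ_[3]) * 3 ^ (n + 1 + 1))) ^ 2
      - s = 3 ^ (n + 1) * v := by
    rw [mul_pow, hε2, ← hr, hv]
    ring
  have h3v : ¬ (3 : ℤ_[3]) ∣ v := by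
    intro h
    rcases hp.dvd_or_dvd h with h | h
    · exact h3α ((dvd_add_left (dvd_mul_right _ _)).mp h)
    · have h2r : (3 : ℤ_[3]) ∣ 2 * r :=
        (dvd_add_left ((dvd_pow_self 3 n.succ_ne_zero).mul_left _)).mp h
      exact (hp.dvd_or_dvd h2r).elim h32 h3r
  have hv0 : v ≠ 0 := fun h => h3v (h ▸ dvd_zero _)
  have hval : v.valuation = 0 := by
    by_contra hne
    have h1 : v ∈ Ideal.span {((3 : ℕ) : ℤ_[3]) ^ 1} :=
      (PadicInt.mem_span_pow_iff_le_valuation v hv0 1).mpr (Nat.one_le_iff_ne_zero.mpr hne)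
    exact h3v (by simpa [Ideal.mem_span_singleton] using h1)
  refine ⟨?_, ?_, fun u hu => ?_⟩
  · rw [hfac]
    exact mul_ne_zero (pow_ne_zero _ h30) hv0
  · rw [hfac]
    have := PadicInt.valuation_p_pow_mul (p := 3) (n + 1) v hv0
    rw [hval] at this
    exact_mod_cast this
  · have huv : u = v := mul_left_cancel₀ (pow_ne_zero (n + 1) h30) (hu.symm.trans hfac)
    have h9 : (9 : ℤ_[3]) ∣
        ((ε : ℤ_[3]) * (r + (α : ℤ_[3]) * 3 ^ (n + 1) + (β : ℤ_[3]) * 3 ^ (n + 1 + 1)) * u -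
          (ε : ℤ_[3]) * 2 * s * ((α : ℤ_[3]) + 3 * (β : ℤ_[3]))) := by
      -- The quotient is `ε a (r a 3^n + a² 3^(2n))` with `a = α + 3β`.
      refine ⟨ε * (α + 3 * β) * (r * (α + 3 * β) * 3 ^ n + (α + 3 * β) ^ 2 * (3 ^ n) ^ 2), ?_⟩
      rw [huv, hv, ← hr]
      ring
    refine ⟨h9, ?_⟩
    have h3 := (show (3 : ℤ_[3]) ∣ 9 from ⟨3, by norm_num⟩).trans h9
    have hh := dvd_add h3 (dvd_mul_right (3 : ℤ_[3]) (ε * 2 * s * β))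
    convert hh using 1
    ring
end

section
/- Let s, t ∈ ℤ_2 be nonzero and suppose 0 ≤ ν_2(s) < 2ν_2(t), and set k := 2ν_2(t) − ν_2(s) ≥ 1. Then ν_2(t² − s) = ν_2(s), and the unit part (t² − s)·2^{−ν_2(s)} satisfies: (t² − s)·2^{−ν_2(s)} ≡ s_2 (mod 4) if k = 1, and (t² − s)·2^{−ν_2(s)} ≡ −s_2 (mod 4) if k ≥ 2. -/
/-!
Write `s = u·2^n` and `t = w·2^m` with `u`, `w` units and put `k = 2m - n ≥ 1`. Then
`t² - s = (w²·2^k - u)·2^n`, and `v = w²·2^k - u` is a unit because it differs from `-u` by a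
multiple of `2`. Hence `n` is the valuation of `t² - s` and `v` is its unit part
(`PadicInt.unitPart_of_eq_mul_pow`). If `k ≥ 2`, then `4` divides `v + u = w²·2^k`. If `k = 1`,
then `v - u = 2(w² - u)`, and `w² - u` is even since both terms are odd
(`PadicInt.two_dvd_sub_of_isUnit`).
-/

open Classical

/-- Uniqueness of the factorization of a nonzero `p`-adic integer as a unit times a power of
`p`. -/
lemma PadicInt.unitPart_of_eq_mul_pow {p : ℕ} [Fact p.Prime] {x v : ℤ_[p]} {n : ℕ}
    (hv : IsUnit v) (hx : x = v * (p : ℤ_[p]) ^ n) :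
    x ≠ 0 ∧ x.valuation = n ∧ x.unitPart = v := by
  have hp : (p : ℤ_[p]) ≠ 0 := PadicInt.prime_p.ne_zero
  have hx0 : x ≠ 0 := by
    rw [hx]; exact mul_ne_zero hv.ne_zero (pow_ne_zero _ hp)
  have hval : x.valuation = n := by
    have hv0 : v.valuation = 0 := by
      have h1 := PadicInt.norm_eq_zpow_neg_valuation hv.ne_zero
      rw [PadicInt.isUnit_iff.mp hv] at h1
      have hp1 : (1 : ℝ) < p := by exact_mod_cast (Fact.out : p.Prime).one_lt
      have h2 := (zpow_eq_one_iff_right₀ (by positivity) hp1.ne').mp h1.symm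
      omega
    rw [hx, mul_comm, PadicInt.valuation_p_pow_mul _ _ hv.ne_zero, hv0, add_zero]
  refine ⟨hx0, hval, ?_⟩
  have hspec := PadicInt.unitCoeff_spec hx0
  rw [hval] at hspec
  rw [PadicInt.unitPart, dif_neg hx0]
  exact mul_right_cancel₀ (pow_ne_zero n hp) (hspec.symm.trans hx)

/-- The residue field of `ℤ_2` has a single nonzero element, so any two units agree mod `2`. -/
lemma PadicInt.two_dvd_sub_of_isUnit {a b : ℤ_[2]} (ha : IsUnit a) (hb : IsUnit b) :
    (2 : ℤ_[2]) ∣ a - b := by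
  have key : ∀ x y : ZMod 2, x ≠ 0 → y ≠ 0 → x - y = 0 := by decide
  have h : PadicInt.toZMod (a - b) = 0 := by
    rw [map_sub]
    exact key _ _ (ha.map PadicInt.toZMod).ne_zero (hb.map PadicInt.toZMod).ne_zero
  rw [← RingHom.mem_ker, PadicInt.ker_toZMod, PadicInt.maximalIdeal_eq_span_p,
    Ideal.mem_span_singleton] at h
  exact_mod_cast h

/-- If `s, t ∈ ℤ_2` are nonzero with `ν_2(s) < 2ν_2(t)` and
`k = 2ν_2(t) − ν_2(s)`, then `ν_2(t² − s) = ν_2(s)` and the unit part of `t² − s` is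
`≡ s_2 (mod 4)` when `k = 1` and `≡ −s_2 (mod 4)` when `k ≥ 2`. -/
theorem unit_part_sub_lt_two (s t : ℤ_[2]) (hs : s ≠ 0) (ht : t ≠ 0)
    (h : s.valuation < 2 * t.valuation) :
    t ^ 2 - s ≠ 0 ∧
    (t ^ 2 - s).valuation = s.valuation ∧
    (2 * t.valuation - s.valuation = 1 →
      (4 : ℤ_[2]) ∣ ((t ^ 2 - s).unitPart - s.unitPart)) ∧
    (2 ≤ 2 * t.valuation - s.valuation →
      (4 : ℤ_[2]) ∣ ((t ^ 2 - s).unitPart + s.unitPart)) := by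
  have hsv := PadicInt.unitCoeff_spec hs
  have htv := PadicInt.unitCoeff_spec ht
  have hsu : s.unitPart = PadicInt.unitCoeff hs := by rw [PadicInt.unitPart, dif_neg hs]
  have hu : IsUnit (PadicInt.unitCoeff hs : ℤ_[2]) := Units.isUnit _
  have hw : IsUnit (PadicInt.unitCoeff ht : ℤ_[2]) := Units.isUnit _
  rw [hsu]
  generalize (PadicInt.unitCoeff hs : ℤ_[2]) = u at *
  generalize (PadicInt.unitCoeff ht : ℤ_[2]) = w at *
  generalize s.valuation = n at *
  generalize t.valuation = m at *
  obtain ⟨j, hj⟩ : ∃ j, 2 * m = n + (j + 1) := ⟨2 * m - n - 1, by omega⟩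
  have hv : IsUnit (w ^ 2 * 2 ^ (j + 1) - u) := by
    by_contra hv
    rw [PadicInt.not_isUnit_iff, PadicInt.norm_lt_one_iff_dvd] at hv
    have h2 : ((2 : ℕ) : ℤ_[2]) ∣ w ^ 2 * 2 ^ (j + 1) :=
      Dvd.intro_left (w ^ 2 * 2 ^ j) (by push_cast; ring)
    exact PadicInt.prime_p.not_isUnit (isUnit_of_dvd_unit ((dvd_sub_right h2).mp hv) hu)
  have hx : t ^ 2 - s = (w ^ 2 * 2 ^ (j + 1) - u) * ((2 : ℕ) : ℤ_[2]) ^ n := by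
    rw [hsv, htv, mul_pow, ← pow_mul, mul_comm m 2, hj]
    push_cast
    ring
  obtain ⟨h0, hval, hup⟩ := PadicInt.unitPart_of_eq_mul_pow hv hx
  refine ⟨h0, hval, fun hk => ?_, fun hk => ?_⟩
  · obtain rfl : j = 0 := by omega
    obtain ⟨c, hc⟩ := PadicInt.two_dvd_sub_of_isUnit (hw.pow 2) hu
    exact ⟨c, by rw [hup]; linear_combination 2 * hc⟩
  · obtain ⟨i, rfl⟩ : ∃ i, j = i + 1 := ⟨j - 1, by omega⟩
    exact ⟨w ^ 2 * 2 ^ i, by rw [hup]; ring⟩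
end

section
/- Let s ∈ ℤ_2 be a unit with s ≡ 1 (mod 8), let r ∈ ℤ_2 satisfy r² = s, and let k ≥ 3 be an integer. Then the set of units d of ℤ/2^{k+3}ℤ satisfying d² ≡ s (mod 2^k) and d² ≢ s (mod 2^{k+1}) (congruences via the reduction map ℤ_2 → ℤ/2^nℤ) is exactly { ε·(r + 2^{k−1}·(1 + 2α₁ + 4α₂ + 8α₃)) mod 2^{k+3} : ε ∈ {1, −1}, α₁, α₂, α₃ ∈ {0, 1} }, and this set has exactly 16 elements. -/
/-!
Writing a class `d` as the image of some `x ∈ ℤ_2`, the conditions on `d` say that `x` is odd and that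
`(x - r) * (x + r) = x ^ 2 - s` has valuation exactly `k`. As `x` and `r` are odd, `x - r` and `x + r`
are even and differ by `2 * r`, so exactly one of them has valuation `1`; the other then has valuation
`k - 1`, that is, `x = ±(r + 2 ^ (k - 1) * u)` with `u` odd (`exists_form_of_dvd`). Conversely
`(r + 2 ^ (k - 1) * u) ^ 2 - s = 2 ^ k * (r * u + 2 ^ (k - 2) * u ^ 2)` has valuation exactly `k`
because `k ≥ 3` (`sq_sub_of_form`). Modulo `2 ^ (k + 3)` only `u` modulo `16` matters, and an odd `u` is
`1 + 2 * a₁ + 4 * a₂ + 8 * a₃` modulo `16` with unique binary digits `aᵢ`. The sixteen classes are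
distinct: the sign is determined since `r` and `-r` differ modulo `4`, and then `u` modulo `16` is
(`param_injective`).
-/

namespace UnitsSquare

lemma prime_two : Prime (2 : ℤ_[2]) := by
  simpa using PadicInt.prime_p (p := 2)

lemma exists_digit (x : ℤ_[2]) : ∃ a ∈ ({0, 1} : Set ℤ_[2]), ∃ y : ℤ_[2], x = a + 2 * y := by
  obtain ⟨n, hn, h⟩ := PadicInt.exists_mem_range x
  rw [PadicInt.maximalIdeal_eq_span_p, Ideal.mem_span_singleton] at h
  obtain ⟨y, hy⟩ := h
  refine ⟨n, ?_, y, by push_cast at hy; linear_combination hy⟩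
  interval_cases n <;> simp

lemma isUnit_iff_not_two_dvd (x : ℤ_[2]) : IsUnit x ↔ ¬ (2 : ℤ_[2]) ∣ x := by
  rw [← not_iff_not, not_not, ← mem_nonunits_iff, ← IsLocalRing.mem_maximalIdeal,
    PadicInt.maximalIdeal_eq_span_p, Ideal.mem_span_singleton]
  simp

lemma exists_of_odd {x : ℤ_[2]} (h : ¬ (2 : ℤ_[2]) ∣ x) : ∃ y : ℤ_[2], x = 1 + 2 * y := by
  obtain ⟨a, ha, y, rfl⟩ := exists_digit x
  rcases ha with rfl | rfl
  · exact absurd ⟨y, by ring⟩ h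
  · exact ⟨y, rfl⟩

lemma toZModPow_eq_iff (n : ℕ) (x y : ℤ_[2]) :
    PadicInt.toZModPow n x = PadicInt.toZModPow n y ↔ (2 : ℤ_[2]) ^ n ∣ x - y := by
  rw [← sub_eq_zero, ← map_sub, ← RingHom.mem_ker, PadicInt.ker_toZModPow,
    Ideal.mem_span_singleton]
  simp

lemma exists_lift (n : ℕ) (d : ZMod (2 ^ n)) : ∃ x : ℤ_[2], PadicInt.toZModPow n x = d :=
  ZMod.ringHom_surjective _ d

lemma castHom_toZModPow {m n : ℕ} (h : m ≤ n) (x : ℤ_[2]) :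
    ZMod.castHom (pow_dvd_pow 2 h) (ZMod (2 ^ m)) (PadicInt.toZModPow n x) =
      PadicInt.toZModPow m x := by
  simpa using PadicInt.cast_toZModPow (p := 2) m n h x

lemma isUnit_toZModPow_iff {n : ℕ} (hn : 1 ≤ n) (x : ℤ_[2]) :
    IsUnit (PadicInt.toZModPow n x) ↔ ¬ (2 : ℤ_[2]) ∣ x := by
  rw [← isUnit_iff_not_two_dvd]
  refine ⟨fun h => ?_, fun h => h.map _⟩
  obtain ⟨y, hy⟩ := h.exists_right_inv
  obtain ⟨z, rfl⟩ := exists_lift n y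
  rw [← map_mul, ← map_one (PadicInt.toZModPow n), toZModPow_eq_iff] at hy
  have h2 : (2 : ℤ_[2]) ∣ x * z - 1 := (dvd_pow_self 2 (by omega)).trans hy
  rw [isUnit_iff_not_two_dvd]
  intro hx
  exact prime_two.not_dvd_one ((dvd_sub_right (hx.mul_right z)).mp h2)

/-- The conditions on `d` in the theorem, expressed on a lift `x` of `d` to `ℤ_2`. -/
lemma mem_iff (s : ℤ_[2]) (k : ℕ) (x : ℤ_[2])
    (h₁ : k ≤ k + 3) (h₂ : k + 1 ≤ k + 3) :
    (IsUnit (PadicInt.toZModPow (k + 3) x) ∧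
        ZMod.castHom (pow_dvd_pow 2 h₁) (ZMod (2 ^ k))
            (PadicInt.toZModPow (k + 3) x ^ 2) = PadicInt.toZModPow k s ∧
        ZMod.castHom (pow_dvd_pow 2 h₂) (ZMod (2 ^ (k + 1)))
            (PadicInt.toZModPow (k + 3) x ^ 2) ≠ PadicInt.toZModPow (k + 1) s) ↔
      ¬ (2 : ℤ_[2]) ∣ x ∧ (2 : ℤ_[2]) ^ k ∣ x ^ 2 - s ∧ ¬ (2 : ℤ_[2]) ^ (k + 1) ∣ x ^ 2 - s := by
  rw [isUnit_toZModPow_iff (by omega), ← map_pow, castHom_toZModPow h₁,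
    castHom_toZModPow h₂, ne_eq, toZModPow_eq_iff, toZModPow_eq_iff]

/-- If `x ^ 2 - r ^ 2` has valuation `k` and `x + r` has valuation `1`, then `x - r` has valuation
`k - 1`. -/
lemma exists_form_aux {x r : ℤ_[2]} {k : ℕ} (hk : 3 ≤ k) (c : ℤ_[2]) (hc : x + r = 2 * c)
    (hodd : ¬ (2 : ℤ_[2]) ∣ c)
    (h1 : (2 : ℤ_[2]) ^ k ∣ x ^ 2 - r ^ 2) (h2 : ¬ (2 : ℤ_[2]) ^ (k + 1) ∣ x ^ 2 - r ^ 2) :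
    ∃ u : ℤ_[2], ¬ (2 : ℤ_[2]) ∣ u ∧ x = r + 2 ^ (k - 1) * u := by
  obtain ⟨k, rfl⟩ : ∃ j, k = j + 1 := ⟨k - 1, by omega⟩
  have e : x ^ 2 - r ^ 2 = 2 * (c * (x - r)) := by linear_combination (x - r) * hc
  rw [e, pow_succ', mul_dvd_mul_iff_left two_ne_zero] at h1
  rw [e, pow_succ', mul_dvd_mul_iff_left two_ne_zero] at h2
  obtain ⟨u, hu⟩ := prime_two.pow_dvd_of_dvd_mul_left k hodd h1
  refine ⟨u, ?_, by simp only [Nat.add_sub_cancel]; linear_combination hu⟩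
  rintro ⟨v, rfl⟩
  exact h2 ⟨c * v, by rw [hu]; ring⟩

lemma exists_form_of_dvd {x r : ℤ_[2]} {k : ℕ} (hk : 3 ≤ k) (hx : ¬ (2 : ℤ_[2]) ∣ x)
    (hr : ¬ (2 : ℤ_[2]) ∣ r)
    (h1 : (2 : ℤ_[2]) ^ k ∣ x ^ 2 - r ^ 2) (h2 : ¬ (2 : ℤ_[2]) ^ (k + 1) ∣ x ^ 2 - r ^ 2) :
    ∃ ε ∈ ({1, -1} : Set ℤ_[2]), ∃ u : ℤ_[2], ¬ (2 : ℤ_[2]) ∣ u ∧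
      x = ε * (r + 2 ^ (k - 1) * u) := by
  obtain ⟨a, ha⟩ := exists_of_odd hx
  obtain ⟨b, hb⟩ := exists_of_odd hr
  -- `(x + r) / 2` and `(-x + r) / 2` add up to the odd number `r`
  by_cases hc : (2 : ℤ_[2]) ∣ 1 + a + b
  · obtain ⟨u, hu, e⟩ := exists_form_aux (x := -x) (r := r) hk (b - a)
      (by rw [ha, hb]; ring)
      (fun h => hr (by
        rw [show r = (1 + a + b) + (b - a) by rw [hb]; ring]
        exact dvd_add hc h))
      (by rwa [neg_sq]) (by rwa [neg_sq])
    exact ⟨-1, by simp, u, hu, by linear_combination -e⟩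
  · obtain ⟨u, hu, e⟩ := exists_form_aux (x := x) (r := r) hk (1 + a + b)
      (by rw [ha, hb]; ring) hc h1 h2
    exact ⟨1, by simp, u, hu, by linear_combination e⟩

lemma sq_sub_of_form {ε r u : ℤ_[2]} {k : ℕ} (hk : 3 ≤ k) (hr : ¬ (2 : ℤ_[2]) ∣ r)
    (hu : ¬ (2 : ℤ_[2]) ∣ u) (hε : ε ∈ ({1, -1} : Set ℤ_[2])) :
    ¬ (2 : ℤ_[2]) ∣ ε * (r + 2 ^ (k - 1) * u) ∧
      (2 : ℤ_[2]) ^ k ∣ (ε * (r + 2 ^ (k - 1) * u)) ^ 2 - r ^ 2 ∧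
      ¬ (2 : ℤ_[2]) ^ (k + 1) ∣ (ε * (r + 2 ^ (k - 1) * u)) ^ 2 - r ^ 2 := by
  obtain ⟨k, rfl⟩ : ∃ j, k = j + 3 := ⟨k - 3, by omega⟩
  rw [show k + 3 - 1 = k + 2 by omega]
  have hε2 : ε ^ 2 = 1 := by rcases hε with rfl | rfl <;> norm_num
  have e : (ε * (r + 2 ^ (k + 2) * u)) ^ 2 - r ^ 2
      = 2 ^ (k + 3) * (r * u + 2 * (2 ^ k * u ^ 2)) := by
    rw [mul_pow, hε2]; ring
  refine ⟨fun h => hr ?_, ⟨_, e⟩, ?_⟩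
  · have h' := h.mul_left ε
    rw [← mul_assoc, ← sq, hε2, one_mul] at h'
    refine (dvd_add_left ?_).mp h'
    exact (dvd_pow_self 2 (by omega)).mul_right u
  · rw [e, pow_succ _ (k + 3), mul_dvd_mul_iff_left (pow_ne_zero _ two_ne_zero),
      dvd_add_left (dvd_mul_right _ _)]
    exact prime_two.not_dvd_mul hr hu

/-- The parametrisation of the classes in the theorem by a sign and three binary digits. -/
noncomputable def param (r : ℤ_[2]) (k : ℕ) (t : ℤˣ × Fin 2 × Fin 2 × Fin 2) :
    ZMod (2 ^ (k + 3)) :=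
  PadicInt.toZModPow (k + 3) (((t.1 : ℤ) : ℤ_[2]) * (r + 2 ^ (k - 1) *
    (((1 + 2 * t.2.1.val + 4 * t.2.2.1.val + 8 * t.2.2.2.val : ℕ) : ℤ) : ℤ_[2])))

lemma param_injective {r : ℤ_[2]} {k : ℕ} (hk : 3 ≤ k) (hr : ¬ (2 : ℤ_[2]) ∣ r) :
    Function.Injective (param r k) := by
  obtain ⟨k, rfl⟩ : ∃ j, k = j + 3 := ⟨k - 3, by omega⟩
  rintro ⟨e, a, b, c⟩ ⟨e', a', b', c'⟩ h
  simp only [param] at h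
  rw [show k + 3 - 1 = k + 2 by omega] at h
  generalize hm : 1 + 2 * a.val + 4 * b.val + 8 * c.val = m at h
  generalize hm' : 1 + 2 * a'.val + 4 * b'.val + 8 * c'.val = m' at h
  rw [toZModPow_eq_iff] at h
  -- opposite signs would force `2 ^ (k + 6) ∣ 2 * r + 2 ^ (k + 2) * y` for some `y`,
  -- so that `4` would divide `2 * r`
  have key : ∀ y : ℤ_[2],
      ¬ (2 : ℤ_[2]) ^ (k + 3 + 3) ∣ 2 * r + 2 ^ (k + 2) * y := by
    rintro y ⟨w, hw⟩
    refine hr ⟨2 ^ (k + 4) * w - 2 ^ k * y, ?_⟩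
    apply mul_left_cancel₀ (two_ne_zero (α := ℤ_[2]))
    linear_combination hw
  have main : e = e' ∧ m = m' := by
    have cancel : (2 : ℤ_[2]) ^ (k + 3 + 3) ∣ 2 ^ (k + 2) * ((m : ℤ) - (m' : ℤ) : ℤ) → m = m' := by
      intro h
      rw [show k + 3 + 3 = k + 2 + 4 by ring, pow_add,
        mul_dvd_mul_iff_left (pow_ne_zero _ two_ne_zero)] at h
      have := (PadicInt.pow_p_dvd_int_iff (p := 2) 4 ((m : ℤ) - m')).mp (by exact_mod_cast h)
      norm_num at this
      omega
    rcases Int.units_eq_one_or e with rfl | rfl <;>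
      rcases Int.units_eq_one_or e' with rfl | rfl
    · refine ⟨rfl, cancel ?_⟩
      convert h using 1; push_cast; ring
    · refine absurd ?_ (key (m + m'))
      convert h using 1; push_cast; ring
    · refine absurd ?_ (key (m + m'))
      rw [← dvd_neg]
      convert h using 1; push_cast; ring
    · refine ⟨rfl, cancel ?_⟩
      rw [← dvd_neg]
      convert h using 1; push_cast; ring
  obtain ⟨rfl, hmm⟩ := main
  simp only [Prod.mk.injEq, Fin.ext_iff, true_and]
  omega

lemma range_param (r : ℤ_[2]) (k : ℕ) :
    {x : ZMod (2 ^ (k + 3)) | ∃ ε ∈ ({1, -1} : Set ℤ_[2]),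
        ∃ a₁ ∈ ({0, 1} : Set ℤ_[2]), ∃ a₂ ∈ ({0, 1} : Set ℤ_[2]),
          ∃ a₃ ∈ ({0, 1} : Set ℤ_[2]),
            x = PadicInt.toZModPow (k + 3)
              (ε * (r + 2 ^ (k - 1) * (1 + 2 * a₁ + 4 * a₂ + 8 * a₃)))} =
      Set.range (param r k) := by
  have sgn : ∀ ε ∈ ({1, -1} : Set ℤ_[2]), ∃ e : ℤˣ, ((e : ℤ) : ℤ_[2]) = ε := by
    rintro ε (rfl | rfl)
    · exact ⟨1, by simp⟩
    · exact ⟨-1, by simp⟩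
  have dig : ∀ a ∈ ({0, 1} : Set ℤ_[2]), ∃ i : Fin 2, ((i.val : ℕ) : ℤ_[2]) = a := by
    rintro a (rfl | rfl)
    · exact ⟨0, by simp⟩
    · exact ⟨1, by simp⟩
  have dig' : ∀ i : Fin 2, ((i.val : ℕ) : ℤ_[2]) ∈ ({0, 1} : Set ℤ_[2]) := by
    intro i; fin_cases i <;> simp
  ext x
  constructor
  · rintro ⟨ε, hε, a, ha, b, hb, c, hc, rfl⟩
    obtain ⟨e, rfl⟩ := sgn ε hε
    obtain ⟨a, rfl⟩ := dig a ha
    obtain ⟨b, rfl⟩ := dig b hb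
    obtain ⟨c, rfl⟩ := dig c hc
    exact ⟨(e, a, b, c), by simp [param]⟩
  · rintro ⟨⟨e, a, b, c⟩, rfl⟩
    refine ⟨((e : ℤ) : ℤ_[2]), ?_, _, dig' a, _, dig' b, _, dig' c, by simp [param]⟩
    rcases Int.units_eq_one_or e with rfl | rfl <;> simp

end UnitsSquare

open UnitsSquare


/-- For a unit `s ∈ ℤ_2` with `s ≡ 1 (mod 8)`, a square root `r` of `s`
in `ℤ_2`, and `k ≥ 3`, the units `d` of `ℤ/2^{k+3}ℤ` with `d² ≡ s (mod 2^k)` and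
`d² ≢ s (mod 2^{k+1})` are exactly the classes of
`ε(r + 2^{k−1}(1 + 2α₁ + 4α₂ + 8α₃))` with `ε ∈ {1,−1}` and `α₁, α₂, α₃ ∈ {0,1}`,
and there are exactly `16` of them. -/
theorem units_square_cong_two (s : ℤ_[2]) (hs : IsUnit s)
    (hs1 : (8 : ℤ_[2]) ∣ (s - 1)) (r : ℤ_[2]) (hr : r ^ 2 = s)
    (k : ℕ) (hk : 3 ≤ k) :
    {d : ZMod (2 ^ (k + 3)) | IsUnit d ∧
        ZMod.castHom (pow_dvd_pow 2 (by omega : k ≤ k + 3)) (ZMod (2 ^ k)) (d ^ 2) =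
          PadicInt.toZModPow k s ∧
        ZMod.castHom (pow_dvd_pow 2 (by omega : k + 1 ≤ k + 3)) (ZMod (2 ^ (k + 1)))
            (d ^ 2) ≠ PadicInt.toZModPow (k + 1) s} =
      {x : ZMod (2 ^ (k + 3)) | ∃ ε ∈ ({1, -1} : Set ℤ_[2]),
        ∃ a₁ ∈ ({0, 1} : Set ℤ_[2]), ∃ a₂ ∈ ({0, 1} : Set ℤ_[2]),
          ∃ a₃ ∈ ({0, 1} : Set ℤ_[2]),
            x = PadicInt.toZModPow (k + 3)
              (ε * (r + 2 ^ (k - 1) * (1 + 2 * a₁ + 4 * a₂ + 8 * a₃)))} ∧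
    {d : ZMod (2 ^ (k + 3)) | IsUnit d ∧
        ZMod.castHom (pow_dvd_pow 2 (by omega : k ≤ k + 3)) (ZMod (2 ^ k)) (d ^ 2) =
          PadicInt.toZModPow k s ∧
        ZMod.castHom (pow_dvd_pow 2 (by omega : k + 1 ≤ k + 3)) (ZMod (2 ^ (k + 1)))
            (d ^ 2) ≠ PadicInt.toZModPow (k + 1) s}.ncard = 16 := by
  have hr2 : ¬ (2 : ℤ_[2]) ∣ r := by
    rw [← isUnit_iff_not_two_dvd]
    rw [← hr] at hs
    exact (isUnit_pow_iff two_ne_zero).mp hs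
  subst hr
  refine and_iff_left_of_imp (fun h => ?_) |>.mpr ?_
  · rw [h, range_param, ← Nat.card_coe_set_eq,
      Nat.card_range_of_injective (param_injective hk hr2)]
    simp [Nat.card_eq_fintype_card]
  · ext d
    obtain ⟨x, rfl⟩ := exists_lift _ d
    rw [Set.mem_ofPred_eq, Set.mem_ofPred_eq, mem_iff _ _ _ (by omega) (by omega)]
    constructor
    · rintro ⟨hx, h1, h2⟩
      obtain ⟨ε, hε, u, hu, rfl⟩ := exists_form_of_dvd hk hx hr2 h1 h2
      obtain ⟨v, rfl⟩ := exists_of_odd hu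
      obtain ⟨a, ha, v, rfl⟩ := exists_digit v
      obtain ⟨b, hb, v, rfl⟩ := exists_digit v
      obtain ⟨c, hc, v, rfl⟩ := exists_digit v
      refine ⟨ε, hε, a, ha, b, hb, c, hc, ?_⟩
      rw [toZModPow_eq_iff]
      refine ⟨ε * v, ?_⟩
      rw [show k + 3 = k - 1 + 4 by omega]
      ring
    · rintro ⟨ε, hε, a, ha, b, hb, c, hc, e⟩
      rw [← mem_iff _ _ _ (by omega) (by omega), e, mem_iff _ _ _ (by omega) (by omega)]
      refine sq_sub_of_form hk hr2 (fun h => prime_two.not_dvd_one ?_) hε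
      refine (dvd_add_left (dvd_mul_right 2 (a + 2 * b + 4 * c))).mp ?_
      convert h using 1
      ring
end

section
/- Let s ∈ ℤ_2 be a unit with s ≡ 1 (mod 8), let r ∈ ℤ_2 satisfy r² = s, let k ≥ 3 be an integer, and fix ε ∈ {1, −1} and α₂, α₃ ∈ {0, 1}. For α₁ ∈ {0, 1} set d(α₁) := ε·(r + 2^{k−1}·(1 + 2α₁ + 4α₂ + 8α₃)) ∈ ℤ_2. Then ν_2(d(α₁)² − s) = k for each α₁ ∈ {0, 1}, and (d(0)² − s)·2^{−k} + (d(1)² − s)·2^{−k} ≡ 0 (mod 4); that is, the residues modulo 4 of the unit parts (d(α₁)² − s)·2^{−k} for α₁ = 0 and α₁ = 1 are negatives of one another. -/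
/-!
Write `m = 1 + 2α₁ + 4α₂ + 8α₃`. Since `ε² = 1` and `r² = s`,
`d² - s = 2^k · (m r + 2^{k-2} m²)`. As `m` and `r` are odd and `k ≥ 3`, the second factor is odd,
so it is the unit part and `k` is the valuation. The values `m₀` and `m₁ = m₀ + 2` belonging to
`α₁ = 0, 1` satisfy `m₀ + m₁ ≡ 0 (mod 4)`, and `m₀² + m₁²` is even, being a sum of two odd
squares; since also `2 ∣ 2^{k-2}`, the sum `r (m₀ + m₁) + 2^{k-2} (m₀² + m₁²)` of the unit parts
is divisible by `4`.
-/

open Classical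

lemma isUnit_add_two_mul {a : ℤ_[2]} (ha : IsUnit a) (c : ℤ_[2]) : IsUnit (a + 2 * c) := by
  by_contra h
  have key : ∀ x : ℤ_[2], ¬ IsUnit x ↔ (2 : ℤ_[2]) ∣ x := fun x => by
    rw [PadicInt.not_isUnit_iff]
    simpa using PadicInt.norm_lt_one_iff_dvd x
  rw [key] at h
  exact (key a).2 ((dvd_add_left (Dvd.intro c rfl)).1 h) ha

lemma valuation_and_unitPart {x u : ℤ_[2]} {k : ℕ} (hu : IsUnit u) (hx : x = 2 ^ k * u) :
    x ≠ 0 ∧ x.valuation = k ∧ x.unitPart = u := by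
  have hp : (2 : ℤ_[2]) ≠ 0 := two_ne_zero
  have hx0 : x ≠ 0 := by rw [hx]; exact mul_ne_zero (pow_ne_zero _ hp) hu.ne_zero
  have hv : x.valuation = k := by
    have h := PadicInt.valuation_p_pow_mul (p := 2) k u hu.ne_zero
    obtain ⟨w, rfl⟩ := hu
    have hw : (w : ℤ_[2]).valuation = 0 := by
      have := PadicInt.norm_eq_zpow_neg_valuation w.ne_zero
      rw [PadicInt.norm_units] at this
      have h2 := (zpow_eq_one_iff_right₀ (a := ((2 : ℕ) : ℝ)) (by norm_num) (by norm_num)).1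
        this.symm
      omega
    rw [hw] at h
    simpa [hx] using h
  refine ⟨hx0, hv, ?_⟩
  have hs := PadicInt.unitCoeff_spec hx0
  rw [hv] at hs
  rw [PadicInt.unitPart, dif_neg hx0]
  refine mul_left_cancel₀ (pow_ne_zero k hp) ?_
  rw [← hx, mul_comm]
  simpa using hs.symm

/-- The factorization of `d² - s`, with the exponent written as `k = j + 3`. -/
lemma sq_sub_eq {ε r : ℤ_[2]} (hε : ε ^ 2 = 1) (m : ℤ_[2]) (j : ℕ) :
    (ε * (r + 2 ^ (j + 3 - 1) * m)) ^ 2 - r ^ 2 =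
      2 ^ (j + 3) * (m * r + 2 * (2 ^ j * m ^ 2)) := by
  rw [mul_pow, hε, show j + 3 - 1 = j + 2 by omega]
  ring

/-- For a unit `s ∈ ℤ_2` with `s ≡ 1 (mod 8)`, a square root `r` of `s`,
`k ≥ 3`, `ε ∈ {1,−1}`, `α₂, α₃ ∈ {0,1}`, and
`d(α₁) = ε(r + 2^{k−1}(1 + 2α₁ + 4α₂ + 8α₃))` for `α₁ ∈ {0,1}`:
one has `ν_2(d(α₁)² − s) = k` for each `α₁ ∈ {0,1}`, and the sum of the unit parts
`(d(0)² − s)·2^{−k} + (d(1)² − s)·2^{−k}` is divisible by `4`, i.e. their residues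
modulo `4` are negatives of one another. -/
theorem unit_part_cong_two (s : ℤ_[2]) (hs : IsUnit s)
    (hs1 : (8 : ℤ_[2]) ∣ (s - 1)) (r : ℤ_[2]) (hr : r ^ 2 = s)
    (k : ℕ) (hk : 3 ≤ k)
    (ε : ℤ_[2]) (hε : ε ∈ ({1, -1} : Set ℤ_[2]))
    (a₂ : ℤ_[2]) (ha₂ : a₂ ∈ ({0, 1} : Set ℤ_[2]))
    (a₃ : ℤ_[2]) (ha₃ : a₃ ∈ ({0, 1} : Set ℤ_[2])) :
    (∀ a₁ ∈ ({0, 1} : Set ℤ_[2]),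
      (ε * (r + 2 ^ (k - 1) * (1 + 2 * a₁ + 4 * a₂ + 8 * a₃))) ^ 2 - s ≠ 0 ∧
      ((ε * (r + 2 ^ (k - 1) * (1 + 2 * a₁ + 4 * a₂ + 8 * a₃))) ^ 2 - s).valuation =
        (k : ℤ)) ∧
    (4 : ℤ_[2]) ∣
      (((ε * (r + 2 ^ (k - 1) * (1 + 2 * 0 + 4 * a₂ + 8 * a₃))) ^ 2 - s).unitPart +
        ((ε * (r + 2 ^ (k - 1) * (1 + 2 * 1 + 4 * a₂ + 8 * a₃))) ^ 2 - s).unitPart) := by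
  subst hr
  obtain ⟨j, rfl⟩ := Nat.exists_eq_add_of_le' hk
  have hε2 : ε ^ 2 = 1 := by
    rcases hε with rfl | rfl <;> simp
  have hr : IsUnit r := (isUnit_pow_iff two_ne_zero).1 hs
  have main : ∀ a₁ : ℤ_[2], _ := fun a₁ =>
    have hm : IsUnit (1 + 2 * a₁ + 4 * a₂ + 8 * a₃) := by
      convert isUnit_add_two_mul isUnit_one (a₁ + 2 * a₂ + 4 * a₃) using 1
      ring
    valuation_and_unitPart (isUnit_add_two_mul (hm.mul hr) _)
      (sq_sub_eq (r := r) hε2 (1 + 2 * a₁ + 4 * a₂ + 8 * a₃) j)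
  refine ⟨fun a₁ _ => ⟨(main a₁).1, by rw [(main a₁).2.1]⟩, ?_⟩
  rw [(main 0).2.2, (main 1).2.2]
  -- With `n = 2 * a₂ + 4 * a₃`: `m₀ + m₁ = 4 * (1 + n)` and `m₀² + m₁² = 2 * (5 + 8 * n + 4 * n²)`.
  exact ⟨r * (1 + (2 * a₂ + 4 * a₃)) +
    2 ^ j * (5 + 8 * (2 * a₂ + 4 * a₃) + 4 * (2 * a₂ + 4 * a₃) ^ 2), by ring⟩
end
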